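/- There exists an absolute constant c such that the following holds. Let P be a set of m distinct points and L a set of n distinct lines in ℝ³, and let q₂ ≤ n be a parameter such that no plane contains more than q₂ lines of L. Then I(P,L) ≤ c·(m^{1/2}·n^{3/4} + m^{2/3}·n^{1/3}·q₂^{1/3} + m + n). -/

import Mathlib

attribute [local instance] Classical.propDecidable

noncomputable section

/-- The number of incidences between a finite set of points and a finite set of
curves (subsets of `ℝ^d`): the number of pairs `(p, γ)` with `p ∈ γ`. -/
def Incidences {d : ℕ} (P : Finset (Fin d → ℝ)) (C : Finset (Set (Fin d → ℝ))) : ℕ :=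
  ((P ×ˢ C).filter fun pc => pc.1 ∈ pc.2).card

/-- A line in `ℝ^d`. -/
def IsLine {d : ℕ} (ℓ : Set (Fin d → ℝ)) : Prop :=
  ∃ a b : Fin d → ℝ, b ≠ 0 ∧ ℓ = {x | ∃ t : ℝ, x = a + t • b}

/-- A plane in `ℝ³`: the zero set of a nonzero affine (degree-one) polynomial. -/
def IsPlane (π : Set (Fin 3 → ℝ)) : Prop :=
  ∃ (a : Fin 3 → ℝ) (c : ℝ), a ≠ 0 ∧ π = {x | (∑ i, a i * x i) + c = 0}

/-!
Write `q₂ = x² y`. For fixed `x` and `y` all terms of the bound `(x + 1) m + m^{1/2} n^{3/4} + (y +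
1) n` but the middle one are linear in `m` and `n`, so that they can be summed over disjoint sets of
points and lines; if `x m = y n` then both products equal `m^{2/3} n^{1/3} q₂^{1/3}`.

A polynomial of degree `D` partitions the points into cells with `O(m / D³)` points each. A line
that is not contained in its zero set `Z` meets at most `D + 1` cells, and the incidences within a
cell are controlled by the Szemerédi–Trotter bound after a generic projection to the plane. The
incidences on `Z` are treated one irreducible factor `f` at a time. If `Z(f)` lies in a plane, it
contains at most `x² y` lines, and Szemerédi–Trotter applies again. Otherwise the points on at most
two lines are harmless. At a point on three lines of `Z(f)` either the gradient vanishes, or the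
three lines span the tangent plane and the Hessian vanishes on it; in both cases the Wronskians of
the partial derivatives of `f` along each of the lines vanish there. On a line with more than `2 deg
f` such points these Wronskians are therefore zero, so that the direction of `∇f` is constant along
the line and `f` vanishes on a whole plane, unless the line is critical, i.e. `∇f = 0` on it. By
Bézout there are at most `(deg f)²` critical lines. For `D` a small multiple of `min (n^{1/2})
(m^{1/2} / n^{1/4})` at most `n / 16` lines remain, and induction on the number of lines applies.

The polynomial ham sandwich theorem is replaced by random signs: after a linear change of
coordinates that makes the evaluations at the points approximately isotropic, a random polynomial
with coefficients `±1` has on average at most `19 / 20` of the pairs of points of a large set on a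
common side. This yields the partition without any topological fixed point theorem.
-/

section IsotropicPosition

open Module

variable {E ι β : Type*} [NormedAddCommGroup E] [InnerProductSpace ℝ E] [Fintype ι]

lemma abs_det_le_prod_norm (e : OrthonormalBasis ι ℝ E) (v : ι → E) :
    |e.toBasis.det v| ≤ ∏ i, ‖v i‖ := by
  set n := Fintype.card ι
  let σ : ι ≃ Fin n := Fintype.equivFin ι
  have : Fact (finrank ℝ E = n) := ⟨finrank_eq_card_basis e.toBasis⟩
  have : FiniteDimensional ℝ E := e.toBasis.finiteDimensional_of_finite
  let o := (e.reindex σ).toBasis.orientation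
  calc |e.toBasis.det v| = |(e.reindex σ).toBasis.det (v ∘ σ.symm)| := by
        simp [Basis.det_reindex, Function.comp_assoc]
    _ = |o.volumeForm (v ∘ σ.symm)| := (o.volumeForm_robust' _ _).symm
    _ ≤ ∏ k, ‖v (σ.symm k)‖ := o.abs_volumeForm_apply_le _
    _ = ∏ i, ‖v i‖ := Equiv.prod_comp σ.symm fun i => ‖v i‖

/-- Contraction by a factor `1 / 2` in the direction of `u`, when `u` is a unit vector. -/
def halfContraction (u : E) : E →ₗ[ℝ] E :=
  LinearMap.transvection (-(1 / 2 : ℝ) • (innerₗ E u : Dual ℝ E)) u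

lemma halfContraction_apply (u x : E) : halfContraction u x = x - (1 / 2 * inner ℝ u x) • u := by
  simp [halfContraction, LinearMap.transvection.apply, sub_eq_add_neg]

lemma norm_sq_halfContraction {u : E} (hu : ‖u‖ = 1) (x : E) :
    ‖halfContraction u x‖ ^ 2 = ‖x‖ ^ 2 - 3 / 4 * inner ℝ x u ^ 2 := by
  rw [halfContraction_apply, norm_sub_sq_real, norm_smul, inner_smul_right, hu,
    real_inner_comm x u, mul_one, Real.norm_eq_abs, sq_abs]
  ring

lemma log_norm_sq_halfContraction_le {u x : E} (hu : ‖u‖ = 1) (hx : halfContraction u x ≠ 0) :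
    Real.log (‖halfContraction u x‖ ^ 2) ≤
      Real.log (‖x‖ ^ 2) - 3 / 4 * (inner ℝ x u ^ 2 / ‖x‖ ^ 2) := by
  have hx0 : 0 < ‖x‖ ^ 2 := by
    have : x ≠ 0 := by rintro rfl; exact hx (map_zero _)
    positivity
  have hpos : 0 < ‖halfContraction u x‖ ^ 2 := by positivity
  have hfactor : ‖halfContraction u x‖ ^ 2 =
      ‖x‖ ^ 2 * (1 - 3 / 4 * (inner ℝ x u ^ 2 / ‖x‖ ^ 2)) := by
    rw [norm_sq_halfContraction hu, mul_sub, mul_one, mul_left_comm, mul_div_cancel₀ _ hx0.ne']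
  rw [hfactor] at hpos ⊢
  have hpos' := pos_of_mul_pos_right hpos hx0.le
  rw [Real.log_mul hx0.ne' hpos'.ne']
  linarith [Real.log_le_sub_one_of_pos hpos']

variable [FiniteDimensional ℝ E]

lemma det_halfContraction {u : E} (hu : ‖u‖ = 1) : LinearMap.det (halfContraction u) = 1 / 2 := by
  rw [halfContraction, LinearMap.transvection.det]
  norm_num [hu]

variable [Fintype β]

/-- The potential whose minimisers over `T` bring the directions of the vectors `b j i` into
radial isotropic position. It is invariant under scaling `T`. -/
def isotropyPotential (b : β → Basis ι ℝ E) (T : E ≃ₗ[ℝ] E) : ℝ :=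
  ∑ j, ∑ i, Real.log (‖T (b j i)‖ ^ 2) -
    2 * Fintype.card β * Real.log |LinearMap.det (T : E →ₗ[ℝ] E)|

lemma bddBelow_range_isotropyPotential (b : β → Basis ι ℝ E) :
    BddBelow (Set.range (isotropyPotential b)) := by
  rcases isEmpty_or_nonempty β with _ | ⟨⟨j₀⟩⟩
  · exact ⟨0, by rintro _ ⟨T, rfl⟩; simp [isotropyPotential]⟩
  let e : OrthonormalBasis ι ℝ E := (stdOrthonormalBasis ℝ E).reindex <|
    Fintype.equivOfCardEq (by simp [finrank_eq_card_basis (b j₀)])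
  refine ⟨∑ j, 2 * Real.log |e.toBasis.det (b j)|, ?_⟩
  rintro _ ⟨T, rfl⟩
  have hdetT : LinearMap.det (T : E →ₗ[ℝ] E) ≠ 0 := (LinearEquiv.isUnit_det' T).ne_zero
  have hadamard (j : β) : 2 * Real.log |LinearMap.det (T : E →ₗ[ℝ] E)| +
      2 * Real.log |e.toBasis.det (b j)| ≤ ∑ i, Real.log (‖T (b j i)‖ ^ 2) := by
    have hdet : e.toBasis.det (b j) ≠ 0 := (e.toBasis.isUnit_det (b j)).ne_zero
    have hle := abs_det_le_prod_norm e (T ∘ b j)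
    rw [← LinearEquiv.coe_coe, Basis.det_comp, abs_mul] at hle
    have hlog := Real.log_le_log (by positivity) hle
    rw [Real.log_mul (by positivity) (by positivity),
      Real.log_prod fun i _ => by simp [(b j).ne_zero i]] at hlog
    simp only [Real.log_pow, ← Finset.mul_sum]
    push_cast
    simp only [Function.comp_apply, LinearEquiv.coe_coe] at hlog
    linarith
  have hsum := Finset.sum_le_sum fun j (_ : j ∈ Finset.univ) => hadamard j
  rw [Finset.sum_add_distrib, Finset.sum_const, nsmul_eq_mul, Finset.card_univ] at hsum
  simp only [isotropyPotential]
  linarith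

lemma exists_isotropyPotential_le (b : β → Basis ι ℝ E) (T : E ≃ₗ[ℝ] E) {u : E} (hu : ‖u‖ = 1) :
    ∃ T' : E ≃ₗ[ℝ] E, isotropyPotential b T' ≤ isotropyPotential b T + 2 * Fintype.card β *
      Real.log 2 - 3 / 4 * ∑ j, ∑ i, inner ℝ (T (b j i)) u ^ 2 / ‖T (b j i)‖ ^ 2 := by
  let S : E ≃ₗ[ℝ] E := LinearMap.equivOfDetNeZero (halfContraction u)
    (by rw [det_halfContraction hu]; norm_num)
  have hS (x : E) : S x = halfContraction u x := rfl
  refine ⟨T.trans S, ?_⟩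
  have hdetT : LinearMap.det (T : E →ₗ[ℝ] E) ≠ 0 := (LinearEquiv.isUnit_det' T).ne_zero
  have hdet : Real.log |LinearMap.det ((T.trans S : E ≃ₗ[ℝ] E) : E →ₗ[ℝ] E)| =
      Real.log |LinearMap.det (T : E →ₗ[ℝ] E)| - Real.log 2 := by
    have hcomp : ((T.trans S : E ≃ₗ[ℝ] E) : E →ₗ[ℝ] E) = halfContraction u ∘ₗ T := rfl
    rw [hcomp, LinearMap.det_comp, det_halfContraction hu, one_div, inv_mul_eq_div, abs_div,
      abs_two, Real.log_div (by positivity) two_ne_zero]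
  have hlog : ∑ j, ∑ i, Real.log (‖T.trans S (b j i)‖ ^ 2) ≤ ∑ j, ∑ i,
      (Real.log (‖T (b j i)‖ ^ 2) - 3 / 4 * (inner ℝ (T (b j i)) u ^ 2 / ‖T (b j i)‖ ^ 2)) :=
    Finset.sum_le_sum fun j _ => Finset.sum_le_sum fun i _ =>
      log_norm_sq_halfContraction_le hu (by simp [← hS, (b j).ne_zero i])
  simp only [Finset.sum_sub_distrib, ← Finset.mul_sum] at hlog
  rw [isotropyPotential, isotropyPotential, hdet]
  linarith

theorem exists_approx_radialIsotropic (b : β → Basis ι ℝ E) :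
    ∃ T : E ≃ₗ[ℝ] E, ∀ u, ∑ j, ∑ i, inner ℝ (T (b j i)) u ^ 2 / ‖T (b j i)‖ ^ 2 ≤
      2 * Fintype.card β * ‖u‖ ^ 2 := by
  rcases isEmpty_or_nonempty β with _ | _
  · exact ⟨.refl ℝ E, by simp⟩
  have hβ : (0 : ℝ) < Fintype.card β := by exact_mod_cast Fintype.card_pos
  obtain ⟨_, ⟨T, rfl⟩, hT⟩ := Real.lt_sInf_add_pos
    (Set.range_nonempty (isotropyPotential b))
    (show 0 < (1 / 10 : ℝ) * Fintype.card β by positivity)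
  have hunit (u : E) (hu : ‖u‖ = 1) :
      ∑ j, ∑ i, inner ℝ (T (b j i)) u ^ 2 / ‖T (b j i)‖ ^ 2 ≤ 2 * Fintype.card β := by
    obtain ⟨T', hT'⟩ := exists_isotropyPotential_le b T hu
    have hinf := csInf_le (bddBelow_range_isotropyPotential b) ⟨T', rfl⟩
    have hlog := mul_lt_mul_of_pos_left Real.log_two_lt_d9 hβ
    linarith
  refine ⟨T, fun u => ?_⟩
  rcases eq_or_ne u 0 with rfl | hu
  · simp
  have hnorm : 0 < ‖u‖ := norm_pos_iff.2 hu
  have hscale := hunit (‖u‖⁻¹ • u) (by simp [norm_smul, hnorm.ne'])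
  simp only [inner_smul_right, mul_pow, mul_div_assoc, ← Finset.mul_sum, inv_pow] at hscale
  rwa [inv_mul_le_iff₀ (by positivity), mul_comm (‖u‖ ^ 2)] at hscale

end IsotropicPosition

section RandomSigns

open Finset

open scoped BigOperators

variable {ι : Type*} [Fintype ι]
  {E : Type*} [NormedAddCommGroup E] [InnerProductSpace ℝ E]

/-- The sum of the basis vectors `e i` with signs `g i`; for uniformly random `g` its inner
products with fixed vectors are Rademacher sums. -/
def signedSum (e : OrthonormalBasis ι ℝ E) (g : ι → ℤˣ) : E := ∑ i, ((g i : ℤ) : ℝ) • e i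

lemma signedSum_ne_zero [Nonempty ι] (e : OrthonormalBasis ι ℝ E) (g : ι → ℤˣ) :
    signedSum e g ≠ 0 := fun h => by
  have hi : inner ℝ (signedSum e g) (e (Classical.arbitrary ι)) = 0 := by rw [h, inner_zero_left]
  simp [signedSum, sum_inner, real_inner_smul_left, e.inner_eq_ite] at hi

lemma inner_signedSum (e : OrthonormalBasis ι ℝ E) (g : ι → ℤˣ) (x : E) :
    inner ℝ (signedSum e g) x = ∑ i, (g i : ℤ) * inner ℝ (e i) x := by
  simp [signedSum, sum_inner, real_inner_smul_left]

lemma intUnits_cast_sq (ε : ℤˣ) : ((ε : ℤ) : ℝ) ^ 2 = 1 := by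
  rcases Int.units_eq_one_or ε with rfl | rfl <;> norm_num

variable [DecidableEq ι]

lemma expect_sign_mul_eq_zero (i : ι) {F : (ι → ℤˣ) → ℝ}
    (hF : ∀ g, F (Function.update g i (-g i)) = F g) :
    𝔼 g : ι → ℤˣ, ((g i : ℤ) : ℝ) * F g = 0 := by
  have hinv : Function.Involutive fun g : ι → ℤˣ => Function.update g i (-g i) := fun g => by simp
  have hflip : 𝔼 g : ι → ℤˣ, ((g i : ℤ) : ℝ) * F g = 𝔼 g : ι → ℤˣ, -(((g i : ℤ) : ℝ) * F g) :=
    Fintype.expect_equiv hinv.toPerm _ _ fun g => by simp [hF]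
  rw [expect_neg_distrib] at hflip
  linarith

lemma expect_sign_mul_sum_pow_eq_zero {i : ι} {s : Finset ι} (hi : i ∉ s) (u : ι → ℝ) (k : ℕ) :
    𝔼 g : ι → ℤˣ, ((g i : ℤ) : ℝ) * (∑ j ∈ s, (g j : ℤ) * u j) ^ k = 0 :=
  expect_sign_mul_eq_zero i fun g => by
    rw [sum_congr rfl fun j hj => by rw [Function.update_of_ne (ne_of_mem_of_not_mem hj hi)]]

lemma expect_sum_sign_mul_sq (u : ι → ℝ) (s : Finset ι) :
    𝔼 g : ι → ℤˣ, (∑ j ∈ s, (g j : ℤ) * u j) ^ 2 = ∑ j ∈ s, u j ^ 2 := by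
  induction s using Finset.induction_on with
  | empty => simp
  | insert i s hi ih =>
    have hexpand (g : ι → ℤˣ) : ((g i : ℤ) * u i + ∑ j ∈ s, (g j : ℤ) * u j) ^ 2 =
        u i ^ 2 + 2 * u i * ((g i : ℤ) * (∑ j ∈ s, (g j : ℤ) * u j) ^ 1) +
          (∑ j ∈ s, (g j : ℤ) * u j) ^ 2 := by
      linear_combination u i ^ 2 * intUnits_cast_sq (g i)
    simp_rw [sum_insert hi, hexpand, expect_add_distrib, ← mul_expect,
      expect_sign_mul_sum_pow_eq_zero hi, ih, expect_const univ_nonempty]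
    ring

lemma expect_sum_sign_mul_pow_four_le (u : ι → ℝ) (s : Finset ι) :
    𝔼 g : ι → ℤˣ, (∑ j ∈ s, (g j : ℤ) * u j) ^ 4 ≤ 3 * (∑ j ∈ s, u j ^ 2) ^ 2 := by
  induction s using Finset.induction_on with
  | empty => simp
  | insert i s hi ih =>
    have hexpand (g : ι → ℤˣ) : ((g i : ℤ) * u i + ∑ j ∈ s, (g j : ℤ) * u j) ^ 4 =
        u i ^ 4 + 4 * u i ^ 3 * ((g i : ℤ) * (∑ j ∈ s, (g j : ℤ) * u j) ^ 1) +
          6 * u i ^ 2 * (∑ j ∈ s, (g j : ℤ) * u j) ^ 2 +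
          4 * u i * ((g i : ℤ) * (∑ j ∈ s, (g j : ℤ) * u j) ^ 3) +
          (∑ j ∈ s, (g j : ℤ) * u j) ^ 4 := by
      linear_combination (u i ^ 4 * (((g i : ℤ) : ℝ) ^ 2 + 1) + 4 * u i ^ 3 * (g i : ℤ) *
        (∑ j ∈ s, (g j : ℤ) * u j) + 6 * u i ^ 2 * (∑ j ∈ s, (g j : ℤ) * u j) ^ 2) *
          intUnits_cast_sq (g i)
    simp_rw [sum_insert hi, hexpand, expect_add_distrib, ← mul_expect,
      expect_sign_mul_sum_pow_eq_zero hi, expect_sum_sign_mul_sq, expect_const univ_nonempty]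
    nlinarith [sq_nonneg (u i ^ 2)]

lemma expect_inner_signedSum_sq (e : OrthonormalBasis ι ℝ E) (x : E) :
    𝔼 g, inner ℝ (signedSum e g) x ^ 2 = ‖x‖ ^ 2 := by
  simp_rw [inner_signedSum, expect_sum_sign_mul_sq, e.sum_sq_inner_right]

lemma expect_inner_signedSum_pow_four_le (e : OrthonormalBasis ι ℝ E) (x : E) :
    𝔼 g, inner ℝ (signedSum e g) x ^ 4 ≤ 3 * ‖x‖ ^ 4 := by
  simp_rw [inner_signedSum]
  refine (expect_sum_sign_mul_pow_four_le _ _).trans_eq ?_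
  rw [e.sum_sq_inner_right]
  ring

end RandomSigns

section SameSignPairs

open Finset

open scoped BigOperators

variable {α : Type*}

/-- The number of ordered pairs from `S` on which `φ` takes values of the same strict sign. For a
polynomial `φ` it measures how badly the zero set of `φ` fails to bisect `S`. -/
def sameSignPairs (S : Finset α) (φ : α → ℝ) : ℕ := #{x ∈ S ×ˢ S | 0 < φ x.1 * φ x.2}

lemma sameSignPairs_eq (S : Finset α) (φ : α → ℝ) :
    sameSignPairs S φ = #{p ∈ S | 0 < φ p} ^ 2 + #{p ∈ S | φ p < 0} ^ 2 := by
  simp_rw [sameSignPairs, mul_pos_iff, filter_or]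
  rw [card_union_of_disjoint (disjoint_filter.2 fun x _ h h' => h.1.not_gt h'.1), sq, sq,
    ← card_product, ← card_product, ← filter_product, ← filter_product]

lemma sameSignPairs_congr {S : Finset α} {φ ψ : α → ℝ} (h : ∀ p ∈ S, φ p = ψ p) :
    sameSignPairs S φ = sameSignPairs S ψ :=
  congrArg card <| filter_congr fun x hx => by
    rw [h x.1 (mem_product.1 hx).1, h x.2 (mem_product.1 hx).2]

lemma sameSignPairs_pos_mul (S : Finset α) {c φ : α → ℝ} (hc : ∀ p, 0 < c p) :
    (sameSignPairs S fun p => c p * φ p) = sameSignPairs S φ := by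
  simp_rw [sameSignPairs, mul_mul_mul_comm, mul_pos_iff_of_pos_left (mul_pos (hc _) (hc _))]

lemma card_pos_add_card_neg_le (S : Finset α) (φ : α → ℝ) :
    #{p ∈ S | 0 < φ p} + #{p ∈ S | φ p < 0} ≤ #S := by
  rw [← card_union_of_disjoint (disjoint_filter.2 fun p _ h h' => h.not_gt h'), ← filter_or]
  exact card_filter_le _ _

lemma sum_abs_add_sum_le (S : Finset α) (φ : α → ℝ) :
    ∑ p ∈ S, |φ p| + ∑ p ∈ S, φ p ≤ 4 * #{p ∈ S | 0 < φ p} + 4⁻¹ * ∑ p ∈ S, φ p ^ 2 := by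
  rw [← sum_boole, mul_sum, mul_sum, ← sum_add_distrib, ← sum_add_distrib]
  refine sum_le_sum fun p _ => ?_
  split_ifs with h
  · rw [abs_of_pos h]
    linarith [sq_nonneg (2 - φ p / 2)]
  · rw [abs_of_nonpos (not_lt.1 h)]
    linarith [sq_nonneg (φ p)]

lemma sum_sq_sub_sum_pow_four_le_sum_abs (S : Finset α) (φ : α → ℝ) :
    ∑ p ∈ S, φ p ^ 2 - 4 / 27 * ∑ p ∈ S, φ p ^ 4 ≤ ∑ p ∈ S, |φ p| := by
  rw [mul_sum, ← sum_sub_distrib]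
  refine sum_le_sum fun p _ => ?_
  rw [← sq_abs, ← (show Even 4 by decide).pow_abs (φ p)]
  have hfactor : 0 ≤ |φ p| * ((|φ p| - 3 / 2) ^ 2 * (|φ p| + 3)) := by positivity
  nlinarith

lemma abs_le_five_mul_sq_div_add {s : ℝ} (hs : 0 < s) (x : ℝ) :
    |x| ≤ 5 * x ^ 2 / s + s / 20 := by
  have hamgm : 5 * x ^ 2 / s + s / 20 - |x| = 5 / s * (|x| - s / 10) ^ 2 := by
    rw [← sq_abs x]
    field_simp
    ring
  have : 0 ≤ 5 / s * (|x| - s / 10) ^ 2 := by positivity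
  linarith

/-- A lower bound for four times the number of points of `S` at which `φ` is positive, expressed
through the moments of `φ` (and hence easy to average). -/
def signMoment (S : Finset α) (φ : α → ℝ) : ℝ :=
  3 / 4 * ∑ p ∈ S, φ p ^ 2 - 4 / 27 * ∑ p ∈ S, φ p ^ 4 - 5 * (∑ p ∈ S, φ p) ^ 2 / #S - #S / 20

lemma signMoment_neg (S : Finset α) (φ : α → ℝ) : signMoment S (-φ) = signMoment S φ := by
  simp [signMoment, (show Even 4 by decide).neg_pow]

lemma signMoment_le {S : Finset α} (hS : S.Nonempty) (φ : α → ℝ) :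
    signMoment S φ ≤ 4 * #{p ∈ S | 0 < φ p} := by
  have h₁ := sum_abs_add_sum_le S φ
  have h₂ := sum_sq_sub_sum_pow_four_le_sum_abs S φ
  have h₃ := abs_le_five_mul_sq_div_add (s := #S) (by exact_mod_cast hS.card_pos) (∑ p ∈ S, φ p)
  have h₄ := neg_abs_le (∑ p ∈ S, φ p)
  rw [signMoment]
  linarith

lemma sameSignPairs_le {S : Finset α} (hS : S.Nonempty) (φ : α → ℝ) :
    (sameSignPairs S φ : ℝ) ≤ #S ^ 2 - #S / 4 * signMoment S φ := by
  have hsum : (#{p ∈ S | 0 < φ p} + #{p ∈ S | φ p < 0} : ℝ) ≤ #S := by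
    exact_mod_cast card_pos_add_card_neg_le S φ
  have hpos := signMoment_le hS φ
  have hneg : signMoment S φ ≤ 4 * #{p ∈ S | φ p < 0} := by
    simpa [signMoment_neg] using signMoment_le hS (-φ)
  have h₀ : (0 : ℝ) ≤ #{p ∈ S | 0 < φ p} * #{p ∈ S | φ p < 0} := by positivity
  rw [sameSignPairs_eq]
  push_cast
  rcases le_or_gt (signMoment S φ) 0 with _ | _ <;> nlinarith

variable {E : Type*} [NormedAddCommGroup E] [InnerProductSpace ℝ E]

lemma norm_sum_sq_le_of_sum_inner_sq_le {S : Finset α} {y : α → E} {C : ℝ} (hC : 0 ≤ C)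
    (h : ∀ u, ∑ p ∈ S, inner ℝ (y p) u ^ 2 ≤ C * ‖u‖ ^ 2) :
    ‖∑ p ∈ S, y p‖ ^ 2 ≤ C * #S := by
  set w := ∑ p ∈ S, y p with hw
  rcases eq_or_ne w 0 with h0 | h0
  · rw [h0, norm_zero, zero_pow two_ne_zero]
    positivity
  · have hnorm : ‖w‖ ^ 2 = ∑ p ∈ S, inner ℝ (y p) w := by
      rw [← sum_inner, ← hw, real_inner_self_eq_norm_sq]
    have hmul : ‖w‖ ^ 2 * ‖w‖ ^ 2 ≤ C * #S * ‖w‖ ^ 2 :=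
      calc ‖w‖ ^ 2 * ‖w‖ ^ 2 = (∑ p ∈ S, inner ℝ (y p) w) ^ 2 := by rw [← hnorm, sq (‖w‖ ^ 2)]
        _ ≤ #S * ∑ p ∈ S, inner ℝ (y p) w ^ 2 := sq_sum_le_card_mul_sum_sq
        _ ≤ #S * (C * ‖w‖ ^ 2) := by gcongr; exact h w
        _ = C * #S * ‖w‖ ^ 2 := by ring
    exact le_of_mul_le_mul_right hmul (by positivity)

variable {ι : Type*} [Fintype ι] [DecidableEq ι]

lemma le_expect_signMoment (e : OrthonormalBasis ι ℝ E) {S : Finset α} (hS : S.Nonempty)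
    {y : α → E} (hy : ∀ p, ‖y p‖ = 1) (hsum : 100 * ‖∑ p ∈ S, y p‖ ^ 2 ≤ #S ^ 2) :
    (#S : ℝ) / 5 ≤ 𝔼 g, signMoment S fun p => inner ℝ (signedSum e g) (y p) := by
  have hs : (0 : ℝ) < #S := by exact_mod_cast hS.card_pos
  have hfour : ∑ p ∈ S, 𝔼 g, inner ℝ (signedSum e g) (y p) ^ 4 ≤ 3 * #S := by
    refine (sum_le_sum fun p _ => expect_inner_signedSum_pow_four_le e (y p)).trans_eq ?_
    simp [hy, mul_comm]
  have hdiv : 5 * ‖∑ p ∈ S, y p‖ ^ 2 / #S ≤ #S / 20 := by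
    rw [div_le_iff₀ hs]
    linarith
  simp_rw [signMoment, ← inner_sum, expect_sub_distrib, ← mul_expect, ← expect_div, ← mul_expect,
    expect_sum_comm, expect_inner_signedSum_sq, expect_const univ_nonempty, hy]
  simp only [one_pow, sum_const, nsmul_eq_mul, mul_one]
  linarith

lemma expect_sameSignPairs_le (e : OrthonormalBasis ι ℝ E) {S : Finset α} (hS : S.Nonempty)
    {y : α → E} (hy : ∀ p, ‖y p‖ = 1) (hsum : 100 * ‖∑ p ∈ S, y p‖ ^ 2 ≤ #S ^ 2) :
    𝔼 g, (sameSignPairs S fun p => inner ℝ (signedSum e g) (y p) : ℝ) ≤ 19 / 20 * #S ^ 2 :=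
  calc _ ≤ 𝔼 g, ((#S : ℝ) ^ 2 - #S / 4 * signMoment S fun p => inner ℝ (signedSum e g) (y p)) :=
        expect_le_expect fun g _ => sameSignPairs_le hS _
    _ = #S ^ 2 - #S / 4 * 𝔼 g, signMoment S fun p => inner ℝ (signedSum e g) (y p) := by
        rw [expect_sub_distrib, ← mul_expect, expect_const univ_nonempty]
    _ ≤ #S ^ 2 - #S / 4 * (#S / 5) := by gcongr; exact le_expect_signMoment e hS hy hsum
    _ = 19 / 20 * #S ^ 2 := by ring

lemma exists_sum_sameSignPairs_inner_le [FiniteDimensional ℝ E] [Nontrivial E]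
    {𝒮 : Finset (Finset α)} {y : α → E} (hy : ∀ p, ‖y p‖ = 1) {C : ℝ} (hC : 0 < C)
    (h : ∀ S ∈ 𝒮, ∀ u, ∑ p ∈ S, inner ℝ (y p) u ^ 2 ≤ C * ‖u‖ ^ 2)
    (hcard : ∀ S ∈ 𝒮, 100 * C ≤ #S) :
    ∃ f : E, f ≠ 0 ∧
      (∑ S ∈ 𝒮, sameSignPairs S fun p => inner ℝ f (y p) : ℝ) ≤
        19 / 20 * ∑ S ∈ 𝒮, (#S : ℝ) ^ 2 := by
  let e := stdOrthonormalBasis ℝ E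
  have : Nonempty (Fin (Module.finrank ℝ E)) := ⟨⟨0, Module.finrank_pos⟩⟩
  have havg : 𝔼 g, (∑ S ∈ 𝒮, sameSignPairs S fun p => inner ℝ (signedSum e g) (y p) : ℝ) ≤
      19 / 20 * ∑ S ∈ 𝒮, (#S : ℝ) ^ 2 := by
    rw [expect_sum_comm, mul_sum]
    refine sum_le_sum fun S hS => ?_
    have hSpos : (0 : ℝ) < #S := lt_of_lt_of_le (by positivity) (hcard S hS)
    refine expect_sameSignPairs_le e (card_pos.1 (by exact_mod_cast hSpos)) hy ?_
    nlinarith [norm_sum_sq_le_of_sum_inner_sq_le hC.le (h S hS), hcard S hS]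
  obtain ⟨g, -, hg⟩ := exists_le_of_expect_le univ_nonempty havg
  exact ⟨signedSum e g, signedSum_ne_zero e g, hg⟩

lemma exists_sum_sameSignPairs_inner_le_of_bases [FiniteDimensional ℝ E] [Nontrivial E]
    {κ β : Type*} [Finite κ] [Fintype β] [Nonempty β] (b : β → Module.Basis κ ℝ E)
    {𝒮 : Finset (Finset α)} {J : α → β × κ} (hJ : ∀ S ∈ 𝒮, Set.InjOn J S)
    (hcard : ∀ S ∈ 𝒮, 200 * Fintype.card β ≤ #S) :
    ∃ f : E, f ≠ 0 ∧ (∑ S ∈ 𝒮, sameSignPairs S fun p => inner ℝ f (b (J p).1 (J p).2) : ℝ) ≤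
      19 / 20 * ∑ S ∈ 𝒮, (#S : ℝ) ^ 2 := by
  have := Fintype.ofFinite κ
  obtain ⟨T, hT⟩ := exists_approx_radialIsotropic b
  set z : α → E := fun p => T (b (J p).1 (J p).2)
  have hz0 (p : α) : 0 < ‖z p‖ := norm_pos_iff.2 <| T.map_ne_zero_iff.2 <| (b _).ne_zero _
  have hbound : ∀ S ∈ 𝒮, ∀ u,
      ∑ p ∈ S, inner ℝ (‖z p‖⁻¹ • z p) u ^ 2 ≤ 2 * Fintype.card β * ‖u‖ ^ 2 := fun S hS u =>
    calc ∑ p ∈ S, inner ℝ (‖z p‖⁻¹ • z p) u ^ 2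
        = ∑ x ∈ S.image J, inner ℝ (T (b x.1 x.2)) u ^ 2 / ‖T (b x.1 x.2)‖ ^ 2 := by
          rw [sum_image (hJ S hS)]
          refine sum_congr rfl fun p _ => ?_
          rw [real_inner_smul_left, mul_pow, inv_pow, inv_mul_eq_div]
      _ ≤ ∑ x : β × κ, inner ℝ (T (b x.1 x.2)) u ^ 2 / ‖T (b x.1 x.2)‖ ^ 2 :=
          sum_le_sum_of_subset_of_nonneg (subset_univ _) fun x _ _ => by positivity
      _ ≤ 2 * Fintype.card β * ‖u‖ ^ 2 := by
          rw [Fintype.sum_prod_type]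
          exact hT u
  obtain ⟨f, hf0, hf⟩ := exists_sum_sameSignPairs_inner_le (y := fun p => ‖z p‖⁻¹ • z p)
    (fun p => norm_smul_inv_norm (𝕜 := ℝ) (norm_pos_iff.1 (hz0 p))) (by positivity) hbound
    fun S hS => by
      have : (200 * Fintype.card β : ℝ) ≤ #S := by exact_mod_cast hcard S hS
      linarith
  refine ⟨LinearMap.adjoint (T : E →ₗ[ℝ] E) f, ?_, ?_⟩
  · rintro h0
    have := LinearMap.adjoint_inner_left (T : E →ₗ[ℝ] E) (T.symm f) f
    rw [h0, inner_zero_left, LinearEquiv.coe_coe, T.apply_symm_apply] at this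
    exact hf0 (inner_self_eq_zero.1 this.symm)
  · simp_rw [real_inner_smul_right, sameSignPairs_pos_mul _ fun p => inv_pos.2 (hz0 p)] at hf
    simpa only [LinearMap.adjoint_inner_left] using! hf

end SameSignPairs

section Perturbation

open Finset Filter Topology

variable {α : Type*} {E : Type*} [NormedAddCommGroup E] [InnerProductSpace ℝ E]
  [FiniteDimensional ℝ E]

lemma eventually_bijective_add_algebraMap (A : Module.End ℝ E) :
    ∀ᶠ x : ℝ in 𝓝[≠] 0, Function.Bijective (A + algebraMap ℝ (Module.End ℝ E) x) := by
  filter_upwards [(Module.End.finite_spectrum (-A)).eventually_cofinite_notMem.filter_mono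
    (nhdsNE_le_cofinite 0)] with x hx
  rw [spectrum.notMem_iff, sub_neg_eq_add, Module.End.isUnit_iff] at hx
  rwa [add_comm]

lemma eventually_exists_basis_eq_add_smul {κ : Type*} [Finite κ] (e : Module.Basis κ ℝ E)
    (w : κ → E) : ∀ᶠ x : ℝ in 𝓝[≠] 0, ∃ b : Module.Basis κ ℝ E, ∀ i, b i = w i + x • e i := by
  filter_upwards [eventually_bijective_add_algebraMap (e.constr ℝ w)] with x hx
  exact ⟨e.map (LinearEquiv.ofBijective _ hx), fun i => by simp⟩

lemma lowerSemicontinuous_sameSignPairs {X : Type*} [TopologicalSpace X] (S : Finset α)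
    {Φ : X → α → ℝ} (hΦ : ∀ p, Continuous fun x => Φ x p) :
    LowerSemicontinuous fun x => (sameSignPairs S (Φ x) : ℝ) := by
  have hsum (x : X) : (sameSignPairs S (Φ x) : ℝ) =
      ∑ q ∈ S ×ˢ S, {x | 0 < Φ x q.1 * Φ x q.2}.indicator (fun _ => (1 : ℝ)) x := by
    simp [sameSignPairs, Set.indicator_apply]
  simp_rw [hsum]
  exact lowerSemicontinuous_sum fun q _ => IsOpen.lowerSemicontinuous_indicator
    (isOpen_lt continuous_const ((hΦ _).mul (hΦ _))) zero_le_one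

lemma exists_ne_zero_sum_sameSignPairs_le_of_frequently {𝒮 : Finset (Finset α)}
    {w : ℝ → α → E} (hw : ∀ p, Continuous fun x => w x p) {c : ℝ}
    (h : ∃ᶠ x in 𝓝 0, ∃ f : E, f ≠ 0 ∧
      (∑ S ∈ 𝒮, sameSignPairs S fun p => inner ℝ f (w x p) : ℝ) ≤ c) :
    ∃ f : E, f ≠ 0 ∧ (∑ S ∈ 𝒮, sameSignPairs S fun p => inner ℝ f (w 0 p) : ℝ) ≤ c := by
  let cost (y : Metric.sphere (0 : E) 1 × ℝ) : ℝ :=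
    ∑ S ∈ 𝒮, sameSignPairs S fun p => inner ℝ (y.1 : E) (w y.2 p)
  have hcost : LowerSemicontinuous cost := lowerSemicontinuous_sum fun S _ =>
    lowerSemicontinuous_sameSignPairs S fun p =>
      (continuous_subtype_val.comp continuous_fst).inner ((hw p).comp continuous_snd)
  have hclosed : IsClosed (Prod.snd '' (cost ⁻¹' Set.Iic c)) :=
    isClosedMap_snd_of_compactSpace _ (lowerSemicontinuous_iff_isClosed_preimage.1 hcost c)
  have hfreq : ∃ᶠ x in 𝓝 (0 : ℝ), x ∈ Prod.snd '' (cost ⁻¹' Set.Iic c) := by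
    refine h.mono ?_
    rintro x ⟨f, hf0, hf⟩
    refine ⟨(⟨‖f‖⁻¹ • f, by simp [norm_smul, hf0]⟩, x), ?_, rfl⟩
    simpa only [cost, Set.mem_preimage, Set.mem_Iic, real_inner_smul_left,
      sameSignPairs_pos_mul _ fun _ => inv_pos.2 (norm_pos_iff.2 hf0)] using hf
  obtain ⟨⟨⟨f, hf⟩, x⟩, hy, rfl⟩ :=
    hclosed.closure_eq.subset (mem_closure_iff_frequently.2 hfreq)
  exact ⟨f, ne_zero_of_mem_unit_sphere ⟨f, hf⟩, hy⟩

lemma exists_blocks {u n : ℕ} (hn : 0 < n) (h : n ≤ u) :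
    ∃ r, 0 < r ∧ u ≤ r * n ∧ r * n ≤ 2 * u :=
  ⟨u / n + 1, Nat.succ_pos _, (Nat.lt_mul_of_div_lt (Nat.lt_succ_self _) hn).le, by
    have := Nat.div_mul_le_self u n
    linarith⟩

lemma exists_sum_sameSignPairs_inner_le_of_finrank_le [Nontrivial E] {U : Finset α}
    {𝒮 : Finset (Finset α)} (hU : ∀ S ∈ 𝒮, S ⊆ U) (w : α → E) (hn : Module.finrank ℝ E ≤ #U)
    (hcard : ∀ S ∈ 𝒮, 400 * #U ≤ #S * Module.finrank ℝ E) :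
    ∃ f : E, f ≠ 0 ∧ (∑ S ∈ 𝒮, sameSignPairs S fun p => inner ℝ f (w p) : ℝ) ≤
      19 / 20 * ∑ S ∈ 𝒮, (#S : ℝ) ^ 2 := by
  set n := Module.finrank ℝ E
  have hn0 : 0 < n := Module.finrank_pos
  have : Nonempty α := (card_pos.1 (hn0.trans_le hn)).to_subtype.map Subtype.val
  obtain ⟨r, hr0, hur, hru⟩ := exists_blocks hn0 hn
  have : Nonempty (Fin r × Fin n) := ⟨⟨0, hr0⟩, ⟨0, hn0⟩⟩
  obtain ⟨J, -, hJ⟩ : ∃ J : α → Fin r × Fin n, (U : Set α) ⊆ J ⁻¹' Set.univ ∧ Set.InjOn J U :=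
    U.finite_toSet.exists_injOn_of_encard_le (by simpa using! mod_cast hur)
  have hblock : ∀ S ∈ 𝒮, 200 * Fintype.card (Fin r) ≤ #S := fun S hS => by
    rw [Fintype.card_fin]
    refine Nat.le_of_mul_le_mul_right ?_ hn0
    linarith [hcard S hS]
  let e := Module.finBasis ℝ E
  let w₀ (x : Fin r × Fin n) : E := w (Function.invFunOn J U x)
  have hw₀ : ∀ p ∈ U, w₀ (J p) = w p := fun p hp => congrArg w (hJ.leftInvOn_invFunOn hp)
  have hgeneric : ∀ᶠ x : ℝ in 𝓝[≠] 0, ∃ f : E, f ≠ 0 ∧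
      (∑ S ∈ 𝒮, sameSignPairs S fun p => inner ℝ f (w₀ (J p) + x • e (J p).2) : ℝ) ≤
        19 / 20 * ∑ S ∈ 𝒮, (#S : ℝ) ^ 2 := by
    filter_upwards [eventually_all.2 fun j : Fin r =>
      eventually_exists_basis_eq_add_smul e fun i => w₀ (j, i)] with x hx
    choose b hb using hx
    have : Nonempty (Fin r) := ⟨0, hr0⟩
    simpa only [hb] using
      exists_sum_sameSignPairs_inner_le_of_bases b (fun S hS => hJ.mono (hU S hS)) hblock
  obtain ⟨f, hf0, hf⟩ := exists_ne_zero_sum_sameSignPairs_le_of_frequently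
    (fun p => by fun_prop) (hgeneric.frequently.filter_mono nhdsWithin_le_nhds)
  refine ⟨f, hf0, le_of_eq_of_le (sum_congr rfl fun S hS => ?_) hf⟩
  rw [sameSignPairs_congr fun p hp => ?_]
  simp [hw₀ p (hU S hS hp)]

variable {V : Type*} [AddCommGroup V] [Module ℝ V] [FiniteDimensional ℝ V]

lemma exists_ne_zero_forall_dual_eq_zero {U : Finset α} (v : α → Module.Dual ℝ V)
    (hU : #U < Module.finrank ℝ V) : ∃ f : V, f ≠ 0 ∧ ∀ p ∈ U, v p f = 0 := by
  obtain ⟨f, hf, hf0⟩ := (Submodule.ne_bot_iff _).1 <| LinearMap.ker_ne_bot_of_finrank_lt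
    (f := LinearMap.pi fun p : U => v p) (by simpa using hU)
  exact ⟨f, hf0, fun p hp => congrFun hf ⟨p, hp⟩⟩

theorem exists_ne_zero_sum_sameSignPairs_le [DecidableEq α] [Nontrivial V]
    (v : α → Module.Dual ℝ V) {𝒮 : Finset (Finset α)}
    (hcard : ∀ S ∈ 𝒮, 400 * #(𝒮.biUnion id) ≤ #S * Module.finrank ℝ V) :
    ∃ f : V, f ≠ 0 ∧ (∑ S ∈ 𝒮, sameSignPairs S fun p => v p f : ℝ) ≤
      19 / 20 * ∑ S ∈ 𝒮, (#S : ℝ) ^ 2 := by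
  set U := 𝒮.biUnion id
  have hU : ∀ S ∈ 𝒮, S ⊆ U := fun S hS => subset_biUnion_of_mem id hS
  rcases lt_or_ge #U (Module.finrank ℝ V) with hlt | hge
  · obtain ⟨f, hf0, hf⟩ := exists_ne_zero_forall_dual_eq_zero v hlt
    refine ⟨f, hf0, (sum_eq_zero fun S hS => ?_).trans_le
      (mul_nonneg (by norm_num) (sum_nonneg fun S _ => sq_nonneg _))⟩
    rw [sameSignPairs_congr (ψ := fun _ => 0) fun p hp => hf p (hU S hS hp)]
    simp [sameSignPairs]
  · let E := EuclideanSpace ℝ (Fin (Module.finrank ℝ V))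
    have hE : Module.finrank ℝ E = Module.finrank ℝ V := finrank_euclideanSpace_fin
    have : Nontrivial E := Module.nontrivial_of_finrank_pos (R := ℝ) (hE.symm ▸ Module.finrank_pos)
    let φ : E ≃ₗ[ℝ] V := LinearEquiv.ofFinrankEq E V hE
    let w (p : α) : E :=
      (InnerProductSpace.toDual ℝ E).symm (v p ∘ₗ (φ : E →ₗ[ℝ] V)).toContinuousLinearMap
    have hw (p : α) (f : E) : inner ℝ f (w p) = v p (φ f) := by
      rw [real_inner_comm, InnerProductSpace.toDual_symm_apply]
      rfl
    obtain ⟨f, hf0, hf⟩ :=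
      exists_sum_sameSignPairs_inner_le_of_finrank_le hU w (hE.symm ▸ hge) (hE.symm ▸ hcard)
    exact ⟨φ f, φ.map_ne_zero_iff.2 hf0, by simpa only [hw] using hf⟩

end Perturbation

section PolynomialPartition

open Finset MvPolynomial

variable {d : ℕ}

/-- `x` and `y` lie in the same cell of the partition of `ℝ^d` cut out by the polynomials `gs`: each
of them has the same nonzero sign at `x` and `y`. The relation is reflexive only off the zero sets
of the polynomials, whose points belong to no cell. -/
def SameCell (gs : List (MvPolynomial (Fin d) ℝ)) (x y : Fin d → ℝ) : Prop :=
  ∀ g ∈ gs, 0 < eval x g * eval y g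

/-- The points of `P` in the cell of `x` of the partition cut out by the polynomials `gs`. -/
def cellOf (P : Finset (Fin d → ℝ)) (gs : List (MvPolynomial (Fin d) ℝ)) (x : Fin d → ℝ) :
    Finset (Fin d → ℝ) :=
  {y ∈ P | SameCell gs x y}

variable {P : Finset (Fin d → ℝ)} {g : MvPolynomial (Fin d) ℝ} {gs : List (MvPolynomial (Fin d) ℝ)}
  {x y z : Fin d → ℝ} {τ : ℝ}

lemma SameCell.symm (h : SameCell gs x y) : SameCell gs y x :=
  fun g hg => mul_comm (eval x g) (eval y g) ▸ h g hg

lemma SameCell.trans (hxy : SameCell gs x y) (hyz : SameCell gs y z) : SameCell gs x z := by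
  intro g hg
  have := mul_pos (hxy g hg) (hyz g hg)
  exact pos_of_mul_pos_left (b := eval y g ^ 2) (by linarith) (sq_nonneg _)

lemma sameCell_self_iff : SameCell gs x x ↔ eval x gs.prod ≠ 0 := by
  simp [SameCell, map_list_prod, List.prod_eq_zero_iff, mul_self_pos]

lemma sameCell_cons : SameCell (g :: gs) x y ↔ 0 < eval x g * eval y g ∧ SameCell gs x y := by
  simp [SameCell]

lemma SameCell.cellOf_eq (h : SameCell gs x y) : cellOf P gs x = cellOf P gs y :=
  filter_congr fun _ _ => ⟨h.symm.trans, h.trans⟩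

lemma cellOf_subset : cellOf P gs x ⊆ P :=
  filter_subset _ _

lemma cellOf_cons_subset : cellOf P (g :: gs) x ⊆ cellOf P gs x :=
  monotone_filter_right _ fun _ _ h => (sameCell_cons.1 h).2

lemma mem_cellOf_iff : y ∈ cellOf P gs x ↔ y ∈ P ∧ SameCell gs x y := mem_filter

/-- The nonempty cells of the partition of `P` cut out by the polynomials `gs`, as point sets. -/
def cells (P : Finset (Fin d → ℝ)) (gs : List (MvPolynomial (Fin d) ℝ)) :
    Finset (Finset (Fin d → ℝ)) :=
  ({x ∈ P | SameCell gs x x} : Finset _).image (cellOf P gs)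

/-- The cells containing more than `τ` points of `P`, as sets of points. -/
def heavyCells (P : Finset (Fin d → ℝ)) (gs : List (MvPolynomial (Fin d) ℝ)) (τ : ℝ) :
    Finset (Finset (Fin d → ℝ)) :=
  {C ∈ cells P gs | τ < #C}

lemma mem_cells_iff {C : Finset (Fin d → ℝ)} :
    C ∈ cells P gs ↔ ∃ x ∈ P, SameCell gs x x ∧ cellOf P gs x = C := by
  simp [cells, and_assoc]

lemma pairwiseDisjoint_cells : (cells P gs : Set (Finset (Fin d → ℝ))).PairwiseDisjoint id := by
  intro C hC C' hC' hne
  obtain ⟨a, -, -, rfl⟩ := mem_cells_iff.1 hC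
  obtain ⟨b, -, -, rfl⟩ := mem_cells_iff.1 hC'
  exact disjoint_left.2 fun x hxa hxb => hne
    ((mem_cellOf_iff.1 hxa).2.trans (mem_cellOf_iff.1 hxb).2.symm).cellOf_eq

/-- The pairs of points of `P` in a common cell that contains more than `τ` points. Their number is
the energy that the iteration decreases. -/
def heavyPairs (P : Finset (Fin d → ℝ)) (gs : List (MvPolynomial (Fin d) ℝ)) (τ : ℝ) :
    Finset ((Fin d → ℝ) × (Fin d → ℝ)) :=
  {x ∈ P ×ˢ P | SameCell gs x.1 x.2 ∧ τ < #(cellOf P gs x.1)}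

lemma card_filter_heavyPairs (R : (Fin d → ℝ) × (Fin d → ℝ) → Prop) :
    #{x ∈ heavyPairs P gs τ | R x} = ∑ C ∈ heavyCells P gs τ, #{x ∈ C ×ˢ C | R x} := by
  rw [← card_biUnion]
  · congr 1
    ext ⟨x, y⟩
    simp only [heavyPairs, heavyCells, mem_filter, mem_product, mem_biUnion, mem_cells_iff]
    constructor
    · rintro ⟨⟨⟨hx, hy⟩, hxy, hτ⟩, hR⟩
      have hxx := hxy.trans hxy.symm
      exact ⟨_, ⟨⟨x, hx, hxx, rfl⟩, hτ⟩,
        ⟨mem_cellOf_iff.2 ⟨hx, hxx⟩, mem_cellOf_iff.2 ⟨hy, hxy⟩⟩, hR⟩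
    · rintro ⟨_, ⟨⟨a, -, -, rfl⟩, hτ⟩, ⟨hx, hy⟩, hR⟩
      rw [mem_cellOf_iff] at hx hy
      exact ⟨⟨⟨hx.1, hy.1⟩, hx.2.symm.trans hy.2, hx.2.cellOf_eq ▸ hτ⟩, hR⟩
  · intro C hC C' hC' hne
    refine disjoint_left.2 fun x hx hx' => ?_
    exact disjoint_left.1 (pairwiseDisjoint_cells (mem_filter.1 hC).1 (mem_filter.1 hC').1 hne)
      (mem_product.1 (mem_filter.1 hx).1).1 (mem_product.1 (mem_filter.1 hx').1).1

lemma card_heavyPairs : #(heavyPairs P gs τ) = ∑ C ∈ heavyCells P gs τ, #C ^ 2 := by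
  simpa [sq] using card_filter_heavyPairs (P := P) (gs := gs) (τ := τ) fun _ => True

lemma card_heavyPairs_cons_le : #(heavyPairs P (g :: gs) τ) ≤
    ∑ C ∈ heavyCells P gs τ, sameSignPairs C fun x => eval x g := by
  refine (card_le_card fun x hx => ?_).trans_eq (card_filter_heavyPairs _)
  simp only [heavyPairs, mem_filter, sameCell_cons] at hx ⊢
  exact ⟨⟨hx.1, hx.2.1.2, hx.2.2.trans_le (mod_cast card_le_card cellOf_cons_subset)⟩, hx.2.1.1⟩

lemma card_biUnion_heavyCells_mul_le :
    #((heavyCells P gs τ).biUnion id) * τ ≤ #(heavyPairs P gs τ) := by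
  rcases le_total τ 0 with hτ | hτ
  · exact (mul_nonpos_of_nonneg_of_nonpos (by positivity) hτ).trans (by positivity)
  calc #((heavyCells P gs τ).biUnion id) * τ ≤ (∑ C ∈ heavyCells P gs τ, #C : ℕ) * τ := by
        gcongr; exact card_biUnion_le
    _ = ∑ C ∈ heavyCells P gs τ, #C * τ := by rw [Nat.cast_sum, sum_mul]
    _ ≤ ∑ C ∈ heavyCells P gs τ, (#C : ℝ) ^ 2 := sum_le_sum fun C hC => by
        rw [sq]; gcongr; exact (mem_filter.1 hC).2.le
    _ = #(heavyPairs P gs τ) := by rw [card_heavyPairs]; norm_cast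

lemma finrank_restrictDegree (d D : ℕ) :
    Module.finrank ℝ (restrictDegree (Fin d) ℝ D) = (D + 1) ^ d := by
  have e : {n : Fin d →₀ ℕ | ∀ i, n i ≤ D} ≃ (Fin d → Fin (D + 1)) :=
    { toFun n i := ⟨n.1 i, Nat.lt_succ_of_le (n.2 i)⟩
      invFun n := ⟨Finsupp.equivFunOnFinite.symm fun i => n i, fun i => Nat.le_of_lt_succ (n i).2⟩
      left_inv n := by ext; rfl
      right_inv n := rfl }
  refine (Module.finrank_eq_nat_card_basis (basisRestrictSupport ℝ _)).trans ?_
  rw [Nat.card_congr e]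
  simp

lemma totalDegree_le_of_mem_restrictDegree {D : ℕ} (hg : g ∈ restrictDegree (Fin d) ℝ D) :
    g.totalDegree ≤ d * D := by
  refine Finset.sup_le fun n hn => ?_
  rw [Finsupp.sum_fintype _ _ fun _ => rfl]
  exact (sum_le_sum fun i _ => (mem_restrictDegree _ _ _).1 hg n hn i).trans_eq (by simp)

lemma exists_card_heavyPairs_cons_le (hτ : 0 < τ) {D : ℕ}
    (hD : 400 * #(heavyPairs P gs τ) ≤ (D + 1 : ℝ) ^ d * τ ^ 2) :
    ∃ g : MvPolynomial (Fin d) ℝ, g ≠ 0 ∧ g.totalDegree ≤ d * D ∧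
      (#(heavyPairs P (g :: gs) τ) : ℝ) ≤ 19 / 20 * #(heavyPairs P gs τ) := by
  let V := restrictDegree (Fin d) ℝ D
  have hV : (Module.finrank ℝ V : ℝ) = (D + 1) ^ d := mod_cast finrank_restrictDegree d D
  have : Nontrivial V := Module.nontrivial_of_finrank_pos (R := ℝ)
    ((finrank_restrictDegree d D).symm ▸ by positivity)
  let ev (x : Fin d → ℝ) : Module.Dual ℝ V := (aeval x).toLinearMap ∘ₗ V.subtype
  have hcard : ∀ C ∈ heavyCells P gs τ,
      400 * #((heavyCells P gs τ).biUnion id) ≤ #C * Module.finrank ℝ V := by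
    intro C hC
    have hunion := card_biUnion_heavyCells_mul_le (P := P) (gs := gs) (τ := τ)
    have hbound : 400 * #((heavyCells P gs τ).biUnion id) ≤ (D + 1 : ℝ) ^ d * τ :=
      le_of_mul_le_mul_right (by linarith) hτ
    have hlarge : (Module.finrank ℝ V : ℝ) * τ ≤ Module.finrank ℝ V * #C := by
      gcongr; exact (mem_filter.1 hC).2.le
    rw [← hV] at hbound
    rw [mul_comm #C]
    exact_mod_cast hbound.trans hlarge
  obtain ⟨⟨g, hgV⟩, hg0, hg⟩ := exists_ne_zero_sum_sameSignPairs_le ev hcard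
  refine ⟨g, fun h => hg0 (Subtype.ext h), totalDegree_le_of_mem_restrictDegree hgV, ?_⟩
  refine (Nat.cast_le.2 card_heavyPairs_cons_le).trans ?_
  rw [card_heavyPairs]
  simpa [ev, aeval_eq_eval] using hg

lemma sq_lt_card_heavyPairs (hτ : 0 ≤ τ) (h : τ < #(cellOf P gs x)) :
    τ ^ 2 < (#(heavyPairs P gs τ) : ℝ) := by
  have hsub : cellOf P gs x ×ˢ cellOf P gs x ⊆ heavyPairs P gs τ := fun ⟨y, z⟩ hyz => by
    simp only [mem_product, mem_cellOf_iff] at hyz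
    simp only [heavyPairs, mem_filter, mem_product]
    exact ⟨⟨hyz.1.1, hyz.2.1⟩, hyz.1.2.symm.trans hyz.2.2, hyz.1.2.cellOf_eq ▸ h⟩
  calc τ ^ 2 < (#(cellOf P gs x) : ℝ) ^ 2 := by gcongr
    _ = (#(cellOf P gs x ×ˢ cellOf P gs x) : ℝ) := by rw [card_product, Nat.cast_mul, sq]
    _ ≤ (#(heavyPairs P gs τ) : ℝ) := mod_cast card_le_card hsub

lemma card_heavyPairs_le {t : ℝ} (h : ∀ x, (#(cellOf P gs x) : ℝ) ≤ t) :
    (#(heavyPairs P gs τ) : ℝ) ≤ #P * t := by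
  have hfiber : heavyPairs P gs τ ⊆
      (P.sigma fun x => cellOf P gs x).map (Equiv.sigmaEquivProd _ _).toEmbedding := by
    intro ⟨x, y⟩ hxy
    simp only [heavyPairs, mem_filter, mem_product] at hxy
    simpa [mem_cellOf_iff] using ⟨hxy.1.1, hxy.1.2, hxy.2.1⟩
  calc (#(heavyPairs P gs τ) : ℝ) ≤ (∑ x ∈ P, #(cellOf P gs x) : ℕ) :=
        mod_cast (card_le_card hfiber).trans_eq (by simp)
    _ ≤ #P * t := by
        rw [Nat.cast_sum, ← nsmul_eq_mul]
        exact sum_le_card_nsmul _ _ _ fun x _ => h x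

/-- The energy shrinks by the factor `19 / 20 ≤ (1 - 1 / (20 d)) ^ d` in each step, while the degree
of the step is `O(d x)`: the degrees form a geometric series with ratio `1 - 1 / (20 d)`. -/
lemma exists_refinement (hd : 0 < d) (hτ : 0 < τ) (gs : List (MvPolynomial (Fin d) ℝ))
    (hgs : gs.prod ≠ 0) {x : ℝ} (hx : 0 < x) (h : #(heavyPairs P gs τ) ≤ x ^ d * τ ^ 2) :
    ∃ gs' : List (MvPolynomial (Fin d) ℝ), gs'.prod ≠ 0 ∧
      (gs'.prod.totalDegree : ℝ) ≤ gs.prod.totalDegree + 8040 * d ^ 2 * x ∧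
      ∀ y, #(cellOf P gs' y) ≤ τ := by
  induction hn : #(heavyPairs P gs τ) using Nat.strong_induction_on generalizing gs x with
  | _ n ih =>
  subst hn
  by_cases hlight : ∀ y, #(cellOf P gs y) ≤ τ
  · exact ⟨gs, hgs, le_add_of_nonneg_right (by positivity), hlight⟩
  obtain ⟨y, hy⟩ := not_forall.1 hlight
  have henergy := sq_lt_card_heavyPairs hτ.le (not_le.1 hy)
  have hx1 : 1 ≤ x := by
    refine (one_le_pow_iff_of_nonneg hx.le hd.ne').1 (le_of_mul_le_mul_right ?_ (pow_pos hτ 2))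
    linarith
  have hceil : (⌈400 * x⌉₊ : ℝ) < 400 * x + 1 := Nat.ceil_lt_add_one (by positivity)
  obtain ⟨g, hg0, hgdeg, hg⟩ := exists_card_heavyPairs_cons_le (D := ⌈400 * x⌉₊) hτ <|
    calc 400 * (#(heavyPairs P gs τ) : ℝ) ≤ 400 ^ d * (x ^ d * τ ^ 2) := by
          gcongr
          exact le_self_pow₀ (by norm_num) hd.ne'
      _ = (400 * x) ^ d * τ ^ 2 := by ring
      _ ≤ (⌈400 * x⌉₊ + 1) ^ d * τ ^ 2 := by
          gcongr
          exact (Nat.le_ceil _).trans (by linarith)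
  have hd1 : (1 : ℝ) ≤ d := mod_cast hd
  have hinv : 1 / (20 * d : ℝ) ≤ 1 / 20 := one_div_le_one_div_of_le (by norm_num) (by linarith)
  have hratio : 19 / 20 ≤ (1 - 1 / (20 * d : ℝ)) ^ d := by
    convert! one_add_mul_le_pow (a := -(1 / (20 * d : ℝ))) (by linarith) d using 1
    field_simp
    norm_num
  obtain ⟨gs', hgs', hdeg, hlight'⟩ := ih _
    (Nat.cast_lt.1 (hg.trans_lt (by linarith [pow_pos hτ 2]))) (g :: gs)
    (by rw [List.prod_cons]; exact mul_ne_zero hg0 hgs)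
    (x := x * (1 - 1 / (20 * d))) (mul_pos hx (by linarith))
    (calc (#(heavyPairs P (g :: gs) τ) : ℝ) ≤ 19 / 20 * (x ^ d * τ ^ 2) := by linarith
      _ ≤ (1 - 1 / (20 * d : ℝ)) ^ d * (x ^ d * τ ^ 2) := by gcongr
      _ = (x * (1 - 1 / (20 * d))) ^ d * τ ^ 2 := by rw [mul_pow]; ring) rfl
  refine ⟨gs', hgs', hdeg.trans ?_, hlight'⟩
  have hcons : ((g :: gs).prod.totalDegree : ℝ) ≤ d * ⌈400 * x⌉₊ + gs.prod.totalDegree := by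
    rw [List.prod_cons]
    exact_mod_cast (totalDegree_mul _ _).trans (Nat.add_le_add_right hgdeg _)
  have hstep : (d : ℝ) * ⌈400 * x⌉₊ ≤ d * (402 * x) := by gcongr; linarith
  have hgeom : 8040 * (d : ℝ) ^ 2 * (x * (1 - 1 / (20 * d))) =
      8040 * d ^ 2 * x - d * (402 * x) := by
    field_simp
    ring
  linarith

theorem exists_polynomial_partition (hd : 0 < d) (P : Finset (Fin d → ℝ)) (k : ℕ) :
    ∃ gs : List (MvPolynomial (Fin d) ℝ), gs.prod ≠ 0 ∧
      (gs.prod.totalDegree : ℝ) ≤ 32160 * d ^ 2 * 2 ^ k ∧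
      ∀ x, (#(cellOf P gs x) : ℝ) ≤ #P / (2 ^ d) ^ k := by
  rcases P.eq_empty_or_nonempty with rfl | hP
  · exact ⟨[], by simp, by simp, fun x => by simp [cellOf]⟩
  have : 0 < #P := hP.card_pos
  induction k with
  | zero =>
    exact ⟨[], by simp, by simp, fun x => by simpa using card_le_card cellOf_subset⟩
  | succ k ih =>
    obtain ⟨gs, hgs, hdeg, hcell⟩ := ih
    set τ : ℝ := #P / (2 ^ d) ^ (k + 1) with hτ
    have henergy : (#(heavyPairs P gs τ) : ℝ) ≤ (2 ^ d) ^ (k + 2) * τ ^ 2 :=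
      (card_heavyPairs_le hcell).trans_eq (by rw [hτ]; field_simp; ring)
    obtain ⟨gs', hgs', hdeg', hcell'⟩ :=
      exists_refinement hd (by positivity) gs hgs (x := 2 ^ (k + 2)) (by positivity)
        (pow_right_comm (2 : ℝ) d _ ▸ henergy)
    exact ⟨gs', hgs', hdeg'.trans ((add_le_add_left hdeg _).trans_eq (by ring)), hcell'⟩

end PolynomialPartition

section Lines

variable {d : ℕ} {a v p q : Fin d → ℝ} {f : MvPolynomial (Fin d) ℝ} {ℓ ℓ' : Set (Fin d → ℝ)}

/-- The line through `a` with direction `v`. -/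
def paramLine (a v : Fin d → ℝ) : Set (Fin d → ℝ) :=
  {x | ∃ t : ℝ, x = a + t • v}

/-- The real zero set of a polynomial. -/
def zeroSet (f : MvPolynomial (Fin d) ℝ) : Set (Fin d → ℝ) :=
  {x | MvPolynomial.eval x f = 0}

/-- The restriction of a polynomial to the line `t ↦ a + t • v`. -/
def restrictLine (a v : Fin d → ℝ) : MvPolynomial (Fin d) ℝ →ₐ[ℝ] Polynomial ℝ :=
  MvPolynomial.aeval fun i => Polynomial.C (a i) + Polynomial.C (v i) * Polynomial.X

lemma add_smul_mem_paramLine (a v : Fin d → ℝ) (t : ℝ) : a + t • v ∈ paramLine a v :=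
  ⟨t, rfl⟩

lemma left_mem_paramLine (a v : Fin d → ℝ) : a ∈ paramLine a v :=
  ⟨0, by simp⟩

lemma IsLine.exists_eq_paramLine (h : IsLine ℓ) : ∃ a v, v ≠ 0 ∧ ℓ = paramLine a v :=
  h

lemma isLine_paramLine (a : Fin d → ℝ) (hv : v ≠ 0) : IsLine (paramLine a v) :=
  ⟨a, v, hv, rfl⟩

lemma paramLine_eq_of_mem (hp : p ∈ paramLine a v) : paramLine a v = paramLine p v := by
  obtain ⟨t, rfl⟩ := hp
  ext x
  constructor
  · rintro ⟨s, rfl⟩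
    exact ⟨s - t, by module⟩
  · rintro ⟨s, rfl⟩
    exact ⟨t + s, by module⟩

lemma paramLine_smul {c : ℝ} (hc : c ≠ 0) : paramLine a (c • v) = paramLine a v := by
  ext x
  constructor
  · rintro ⟨s, rfl⟩
    exact ⟨s * c, by module⟩
  · rintro ⟨s, rfl⟩
    exact ⟨s / c, by rw [smul_smul, div_mul_cancel₀ _ hc]⟩

lemma IsLine.eq_paramLine (h : IsLine ℓ) (hp : p ∈ ℓ) (hq : q ∈ ℓ) (hpq : p ≠ q) :
    ℓ = paramLine p (q - p) := by
  obtain ⟨a, v, -, rfl⟩ := h.exists_eq_paramLine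
  rw [paramLine_eq_of_mem hp] at hq ⊢
  obtain ⟨t, rfl⟩ := hq
  have ht : t ≠ 0 := by rintro rfl; simp at hpq
  rw [add_sub_cancel_left, paramLine_smul ht]

lemma IsLine.eq_of_mem (h : IsLine ℓ) (h' : IsLine ℓ') (hpq : p ≠ q) (hp : p ∈ ℓ) (hq : q ∈ ℓ)
    (hp' : p ∈ ℓ') (hq' : q ∈ ℓ') : ℓ = ℓ' := by
  rw [h.eq_paramLine hp hq hpq, h'.eq_paramLine hp' hq' hpq]

lemma IsLine.eq_of_subset (h : IsLine ℓ) (h' : IsLine ℓ') (hsub : ℓ ⊆ ℓ') : ℓ = ℓ' := by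
  obtain ⟨a, v, hv, rfl⟩ := h.exists_eq_paramLine
  have h0 := left_mem_paramLine a v
  have h1 : a + v ∈ paramLine a v := ⟨1, by simp⟩
  exact h.eq_of_mem h' (by simpa using hv) h0 h1 (hsub h0) (hsub h1)

lemma eval_restrictLine (a v : Fin d → ℝ) (f : MvPolynomial (Fin d) ℝ) (t : ℝ) :
    (restrictLine a v f).eval t = MvPolynomial.eval (a + t • v) f := by
  induction f using MvPolynomial.induction_on with
  | C r => simp [restrictLine]
  | add p q hp hq => simp [hp, hq]
  | mul_X p i hp =>
    rw [map_mul, Polynomial.eval_mul, hp, map_mul, MvPolynomial.eval_X]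
    simp [restrictLine, -mul_eq_mul_left_iff, mul_comm (v i) t]

lemma natDegree_restrictLine_le (a v : Fin d → ℝ) (f : MvPolynomial (Fin d) ℝ) :
    (restrictLine a v f).natDegree ≤ f.totalDegree := by
  simpa [restrictLine] using MvPolynomial.aeval_natDegree_le f le_rfl
    (fun i => Polynomial.C (a i) + Polynomial.C (v i) * Polynomial.X) (n := 1)
    fun i => by compute_degree

lemma paramLine_subset_zeroSet_iff : paramLine a v ⊆ zeroSet f ↔ restrictLine a v f = 0 := by
  constructor
  · intro h
    refine Polynomial.funext fun t => ?_
    rw [eval_restrictLine, Polynomial.eval_zero]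
    exact h (add_smul_mem_paramLine a v t)
  · rintro h _ ⟨t, rfl⟩
    rw [zeroSet, Set.mem_ofPred_eq, ← eval_restrictLine, h, Polynomial.eval_zero]

lemma IsLine.subset_zeroSet_mul_iff (h : IsLine ℓ) {g : MvPolynomial (Fin d) ℝ} :
    ℓ ⊆ zeroSet (f * g) ↔ ℓ ⊆ zeroSet f ∨ ℓ ⊆ zeroSet g := by
  obtain ⟨a, v, -, rfl⟩ := h.exists_eq_paramLine
  simp_rw [paramLine_subset_zeroSet_iff, map_mul, mul_eq_zero]

lemma card_roots_restrictLine_le (a v : Fin d → ℝ) (f : MvPolynomial (Fin d) ℝ) :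
    (restrictLine a v f).roots.toFinset.card ≤ f.totalDegree :=
  (Multiset.toFinset_card_le _).trans
    ((Polynomial.card_roots' _).trans (natDegree_restrictLine_le a v f))

lemma add_smul_mem_zeroSet_iff {t : ℝ} (h : restrictLine a v f ≠ 0) :
    a + t • v ∈ zeroSet f ↔ t ∈ (restrictLine a v f).roots.toFinset := by
  rw [Multiset.mem_toFinset, Polynomial.mem_roots h, Polynomial.IsRoot.def, eval_restrictLine]
  rfl

lemma IsLine.card_filter_mem_zeroSet_le (hℓ : IsLine ℓ) (hf : ¬ ℓ ⊆ zeroSet f)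
    (P : Finset (Fin d → ℝ)) : (P.filter fun p => p ∈ ℓ ∧ p ∈ zeroSet f).card ≤ f.totalDegree := by
  obtain ⟨a, v, -, rfl⟩ := hℓ.exists_eq_paramLine
  rw [paramLine_subset_zeroSet_iff] at hf
  have hsub : (P.filter fun p => p ∈ paramLine a v ∧ p ∈ zeroSet f) ⊆
      (restrictLine a v f).roots.toFinset.image fun t => a + t • v := by
    intro p hp
    obtain ⟨-, ⟨t, rfl⟩, ht⟩ := Finset.mem_filter.1 hp
    exact Finset.mem_image_of_mem _ ((add_smul_mem_zeroSet_iff hf).1 ht)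
  exact (Finset.card_le_card hsub).trans
    (Finset.card_image_le.trans (card_roots_restrictLine_le a v f))

end Lines

section IncidenceCounting

open Finset

variable {d : ℕ} {P P' : Finset (Fin d → ℝ)} {L L' : Finset (Set (Fin d → ℝ))}

lemma incidences_eq_sum_lines (P : Finset (Fin d → ℝ)) (L : Finset (Set (Fin d → ℝ))) :
    Incidences P L = ∑ ℓ ∈ L, #{p ∈ P | p ∈ ℓ} := by
  simp_rw [Incidences, card_filter, sum_product_right]

lemma incidences_eq_sum_points (P : Finset (Fin d → ℝ)) (L : Finset (Set (Fin d → ℝ))) :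
    Incidences P L = ∑ p ∈ P, #{ℓ ∈ L | p ∈ ℓ} := by
  simp_rw [Incidences, card_filter, sum_product]

lemma incidences_eq_add_filter_points (P : Finset (Fin d → ℝ)) (L : Finset (Set (Fin d → ℝ)))
    (A : (Fin d → ℝ) → Prop) :
    Incidences P L = Incidences {p ∈ P | A p} L + Incidences {p ∈ P | ¬ A p} L := by
  simp_rw [incidences_eq_sum_points, sum_filter_add_sum_filter_not]

lemma incidences_eq_add_filter_lines (P : Finset (Fin d → ℝ)) (L : Finset (Set (Fin d → ℝ)))
    (A : Set (Fin d → ℝ) → Prop) :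
    Incidences P L = Incidences P {ℓ ∈ L | A ℓ} + Incidences P {ℓ ∈ L | ¬ A ℓ} := by
  simp_rw [incidences_eq_sum_lines, sum_filter_add_sum_filter_not]

lemma incidences_sdiff_add_incidences_points (hP : P' ⊆ P) (L : Finset (Set (Fin d → ℝ))) :
    Incidences (P \ P') L + Incidences P' L = Incidences P L := by
  simp_rw [incidences_eq_sum_points, sum_sdiff hP]

lemma incidences_sdiff_add_incidences_lines (P : Finset (Fin d → ℝ)) (hL : L' ⊆ L) :
    Incidences P (L \ L') + Incidences P L' = Incidences P L := by
  simp_rw [incidences_eq_sum_lines, sum_sdiff hL]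

lemma incidences_le_card_lines_mul {k : ℕ} (h : ∀ ℓ ∈ L, #{p ∈ P | p ∈ ℓ} ≤ k) :
    Incidences P L ≤ #L * k :=
  (incidences_eq_sum_lines P L).trans_le (sum_le_card_nsmul _ _ _ h)

lemma incidences_le_card_points_mul {k : ℕ} (h : ∀ p ∈ P, #{ℓ ∈ L | p ∈ ℓ} ≤ k) :
    Incidences P L ≤ #P * k :=
  (incidences_eq_sum_points P L).trans_le (sum_le_card_nsmul _ _ _ h)

lemma incidences_mono (hP : P ⊆ P') (hL : L ⊆ L') : Incidences P L ≤ Incidences P' L' :=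
  card_le_card (filter_subset_filter _ (product_subset_product hP hL))

/-- A set `A b` with at least two elements contains at least `#(A b) - 1` ordered pairs of distinct
elements, and no such pair lies in two of the sets. -/
lemma sum_card_le_of_pairwise_subsingleton_inter {α β : Type*} {B : Finset β} {S : Finset α}
    {A : β → Finset α} (hA : ∀ b ∈ B, A b ⊆ S)
    (h : (B : Set β).Pairwise fun b b' => (A b ∩ A b' : Set α).Subsingleton) :
    ∑ b ∈ B, #(A b) ≤ #B + #S ^ 2 := by
  have hpairs (b : β) : #(A b) ≤ 1 + #(A b).offDiag := by
    rw [offDiag_card]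
    rcases #(A b) with _ | _ | k
    · simp
    · simp
    · have : (k + 1 + 1) * (k + 1 + 1) = k * k + 4 * k + 4 := by ring
      omega
  have hdisj : (B : Set β).PairwiseDisjoint fun b => (A b).offDiag := by
    intro b hb b' hb' hne
    refine disjoint_left.2 fun x hx hx' => ?_
    rw [mem_offDiag] at hx hx'
    exact hx.2.2 (h hb hb' hne ⟨hx.1, hx'.1⟩ ⟨hx.2.1, hx'.2.1⟩)
  calc ∑ b ∈ B, #(A b) ≤ ∑ b ∈ B, (1 + #(A b).offDiag) := sum_le_sum fun b _ => hpairs b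
    _ = #B + #(B.biUnion fun b => (A b).offDiag) := by
        rw [sum_add_distrib, card_biUnion hdisj, card_eq_sum_ones]
    _ ≤ #B + #(S ×ˢ S) := by
        gcongr
        refine biUnion_subset.2 fun b hb => (offDiag_mono (hA b hb)).trans fun x hx => ?_
        rw [mem_offDiag] at hx
        exact mem_product.2 ⟨hx.1, hx.2.1⟩
    _ = #B + #S ^ 2 := by rw [card_product, sq]

lemma incidences_le_card_lines_add_sq (P : Finset (Fin d → ℝ)) (hL : ∀ ℓ ∈ L, IsLine ℓ) :
    Incidences P L ≤ #L + #P ^ 2 := by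
  rw [incidences_eq_sum_lines]
  refine sum_card_le_of_pairwise_subsingleton_inter (fun ℓ _ => filter_subset _ _) ?_
  intro ℓ hℓ ℓ' hℓ' hne p hp q hq
  by_contra hpq
  simp only [coe_filter, Set.mem_inter_iff, Set.mem_ofPred_eq] at hp hq
  exact hne ((hL ℓ hℓ).eq_of_mem (hL ℓ' hℓ') hpq hp.1.2 hq.1.2 hp.2.2 hq.2.2)

lemma incidences_le_card_points_add_sq (P : Finset (Fin d → ℝ)) (hL : ∀ ℓ ∈ L, IsLine ℓ) :
    Incidences P L ≤ #P + #L ^ 2 := by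
  rw [incidences_eq_sum_points]
  refine sum_card_le_of_pairwise_subsingleton_inter (fun p _ => filter_subset _ _) ?_
  intro p _ q _ hpq ℓ hℓ ℓ' hℓ'
  simp only [coe_filter, Set.mem_inter_iff, Set.mem_ofPred_eq] at hℓ hℓ'
  exact (hL ℓ hℓ.1.1).eq_of_mem (hL ℓ' hℓ'.1.1) hpq hℓ.1.2 hℓ.2.2 hℓ'.1.2 hℓ'.2.2

end IncidenceCounting

section CellIncidences

open Finset MvPolynomial

variable {d : ℕ} {P : Finset (Fin d → ℝ)} {gs : List (MvPolynomial (Fin d) ℝ)}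
  {L : Finset (Set (Fin d → ℝ))} {ℓ : Set (Fin d → ℝ)}

lemma sameCell_of_isPreconnected {S : Set (Fin d → ℝ)} (hS : IsPreconnected S)
    (h : ∀ x ∈ S, eval x gs.prod ≠ 0) {x y : Fin d → ℝ} (hx : x ∈ S) (hy : y ∈ S) :
    SameCell gs x y := by
  intro g hg
  have hne : ∀ z ∈ S, eval z g ≠ 0 := fun z hz h0 => h z hz <| by
    rw [map_list_prod]
    exact List.prod_eq_zero (List.mem_map.2 ⟨g, hg, h0⟩)
  have hzero : (0 : ℝ) ∉ (fun z => eval z g) '' S := by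
    rintro ⟨z, hz, h0⟩
    exact hne z hz h0
  have hconn := (hS.image _ (continuous_eval g).continuousOn).ordConnected
  rcases (hne x hx).lt_or_gt with hx0 | hx0 <;> rcases (hne y hy).lt_or_gt with hy0 | hy0
  · exact mul_pos_of_neg_of_neg hx0 hy0
  · exact (hzero (hconn.out ⟨x, hx, rfl⟩ ⟨y, hy, rfl⟩ ⟨hx0.le, hy0.le⟩)).elim
  · exact (hzero (hconn.out ⟨y, hy, rfl⟩ ⟨x, hx, rfl⟩ ⟨hy0.le, hx0.le⟩)).elim
  · exact mul_pos hx0 hy0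

/-- Two points of a line with equally many zeros of `gs.prod` to their left have none in between. -/
lemma sameCell_of_card_roots_eq {a v : Fin d → ℝ} (hf : restrictLine a v gs.prod ≠ 0) {s t : ℝ}
    (hs : eval (a + s • v) gs.prod ≠ 0) (ht : eval (a + t • v) gs.prod ≠ 0)
    (hcard : #{r ∈ (restrictLine a v gs.prod).roots.toFinset | r < s} =
      #{r ∈ (restrictLine a v gs.prod).roots.toFinset | r < t}) :
    SameCell gs (a + s • v) (a + t • v) := by
  wlog hst : s ≤ t generalizing s t
  · exact (this ht hs hcard.symm (le_of_not_ge hst)).symm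
  have hline : Continuous fun u : ℝ => a + u • v := by fun_prop
  refine sameCell_of_isPreconnected (isPreconnected_Icc.image (fun u : ℝ => a + u • v)
    hline.continuousOn) ?_ ⟨s, ⟨le_rfl, hst⟩, rfl⟩ ⟨t, ⟨hst, le_rfl⟩, rfl⟩
  rintro _ ⟨u, ⟨hsu, hut⟩, rfl⟩ hu
  have hut' : u < t := hut.lt_of_ne fun h => ht (h ▸ hu)
  have heq := eq_of_subset_of_card_le
    (monotone_filter_right (restrictLine a v gs.prod).roots.toFinset
      fun r (_ : r ∈ _) (hr : r < s) => hr.trans_le hst) hcard.ge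
  have hmem : u ∈ {r ∈ (restrictLine a v gs.prod).roots.toFinset | r < t} :=
    mem_filter.2 ⟨(add_smul_mem_zeroSet_iff hf).1 hu, hut'⟩
  rw [← heq] at hmem
  exact hsu.not_gt (mem_filter.1 hmem).2

lemma card_filter_cells_le (hℓ : IsLine ℓ) (P : Finset (Fin d → ℝ))
    (gs : List (MvPolynomial (Fin d) ℝ)) :
    #{C ∈ cells P gs | ∃ x ∈ C, x ∈ ℓ} ≤ gs.prod.totalDegree + 1 := by
  obtain ⟨a, v, -, rfl⟩ := hℓ.exists_eq_paramLine
  have hrep : ∀ C ∈ ({C ∈ cells P gs | ∃ x ∈ C, x ∈ paramLine a v} : Finset _),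
      ∃ t : ℝ, eval (a + t • v) gs.prod ≠ 0 ∧ cellOf P gs (a + t • v) = C := by
    intro C hC
    obtain ⟨hC, x, hxC, t, rfl⟩ := mem_filter.1 hC
    obtain ⟨y, -, -, rfl⟩ := mem_cells_iff.1 hC
    have hyx := (mem_cellOf_iff.1 hxC).2
    exact ⟨t, sameCell_self_iff.1 (hyx.symm.trans hyx), hyx.symm.cellOf_eq⟩
  choose! t ht hcell using hrep
  set R := (restrictLine a v gs.prod).roots.toFinset
  rw [← card_range (gs.prod.totalDegree + 1)]
  refine card_le_card_of_injOn (fun C => #{r ∈ R | r < t C}) (fun C _ => ?_)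
    fun C hC C' hC' hcard => ?_
  · simpa [Nat.lt_succ_iff] using
      (card_filter_le _ _).trans (card_roots_restrictLine_le a v gs.prod)
  · have hf : restrictLine a v gs.prod ≠ 0 := fun h => ht C hC <| by
      rw [← eval_restrictLine, h, Polynomial.eval_zero]
    rw [← hcell C hC, ← hcell C' hC',
      (sameCell_of_card_roots_eq hf (ht C hC) (ht C' hC') hcard).cellOf_eq]

lemma sum_card_filter_lines_cells_le (hL : ∀ ℓ ∈ L, IsLine ℓ) (P : Finset (Fin d → ℝ))
    (gs : List (MvPolynomial (Fin d) ℝ)) :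
    ∑ C ∈ cells P gs, #{ℓ ∈ L | ∃ x ∈ C, x ∈ ℓ} ≤ #L * (gs.prod.totalDegree + 1) := by
  simp_rw [card_filter]
  rw [sum_comm]
  simp_rw [← card_filter]
  exact sum_le_card_nsmul _ _ _ fun ℓ hℓ => card_filter_cells_le (hL ℓ hℓ) P gs

lemma biUnion_cells (P : Finset (Fin d → ℝ)) (gs : List (MvPolynomial (Fin d) ℝ)) :
    (cells P gs).biUnion id = {x ∈ P | x ∉ zeroSet gs.prod} := by
  ext x
  simp only [mem_filter, mem_biUnion, mem_cells_iff, id]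
  constructor
  · rintro ⟨_, ⟨y, -, -, rfl⟩, hxC⟩
    obtain ⟨hx, hyx⟩ := mem_cellOf_iff.1 hxC
    exact ⟨hx, sameCell_self_iff.1 (hyx.symm.trans hyx)⟩
  · rintro ⟨hx, hxz⟩
    have hxx := sameCell_self_iff.2 hxz
    exact ⟨_, ⟨x, hx, hxx, rfl⟩, mem_cellOf_iff.2 ⟨hx, hxx⟩⟩

lemma incidences_notMem_zeroSet_eq (P : Finset (Fin d → ℝ)) (L : Finset (Set (Fin d → ℝ)))
    (gs : List (MvPolynomial (Fin d) ℝ)) :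
    Incidences {x ∈ P | x ∉ zeroSet gs.prod} L =
      ∑ C ∈ cells P gs, Incidences C {ℓ ∈ L | ∃ x ∈ C, x ∈ ℓ} := by
  rw [incidences_eq_sum_points, ← biUnion_cells, sum_biUnion pairwiseDisjoint_cells]
  refine sum_congr rfl fun C _ => ?_
  rw [incidences_eq_sum_points]
  refine sum_congr rfl fun x hx => congrArg card ?_
  rw [filter_filter]
  exact filter_congr fun ℓ _ => ⟨fun h => ⟨⟨x, hx, h⟩, h⟩, And.right⟩

theorem incidences_notMem_zeroSet_le (hL : ∀ ℓ ∈ L, IsLine ℓ) {α β : ℝ} (hβ : 0 ≤ β)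
    (hcell : ∀ C ∈ cells P gs, (Incidences C {ℓ ∈ L | ∃ x ∈ C, x ∈ ℓ} : ℝ) ≤
      α * #C + β * #{ℓ ∈ L | ∃ x ∈ C, x ∈ ℓ}) :
    (Incidences {x ∈ P | x ∉ zeroSet gs.prod} L : ℝ) ≤
      α * #{x ∈ P | x ∉ zeroSet gs.prod} + β * (#L * (gs.prod.totalDegree + 1)) := by
  have hpoints : ∑ C ∈ cells P gs, (#C : ℝ) = #{x ∈ P | x ∉ zeroSet gs.prod} := by
    rw [← biUnion_cells]
    exact mod_cast (card_biUnion pairwiseDisjoint_cells).symm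
  have hlines : ∑ C ∈ cells P gs, (#{ℓ ∈ L | ∃ x ∈ C, x ∈ ℓ} : ℝ) ≤
      #L * (gs.prod.totalDegree + 1) := mod_cast sum_card_filter_lines_cells_le hL P gs
  rw [incidences_notMem_zeroSet_eq, Nat.cast_sum]
  refine (sum_le_sum hcell).trans ?_
  rw [sum_add_distrib, ← mul_sum, ← mul_sum, hpoints]
  gcongr

lemma incidences_zeroSet_le (hL : ∀ ℓ ∈ L, IsLine ℓ) (f : MvPolynomial (Fin d) ℝ)
    (hf : ∀ ℓ ∈ L, ¬ ℓ ⊆ zeroSet f) :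
    Incidences {x ∈ P | x ∈ zeroSet f} L ≤ #L * f.totalDegree := by
  refine incidences_le_card_lines_mul fun ℓ hℓ => ?_
  simpa only [filter_filter, and_comm] using
    (hL ℓ hℓ).card_filter_mem_zeroSet_le (hf ℓ hℓ) P

lemma incidences_le_of_zeroSet (P : Finset (Fin d → ℝ)) (hL : ∀ ℓ ∈ L, IsLine ℓ)
    (g : MvPolynomial (Fin d) ℝ) :
    Incidences P L ≤ Incidences {x ∈ P | x ∈ zeroSet g} {ℓ ∈ L | ℓ ⊆ zeroSet g} +
      #{ℓ ∈ L | ¬ ℓ ⊆ zeroSet g} * g.totalDegree +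
      Incidences {x ∈ P | x ∉ zeroSet g} {ℓ ∈ L | ¬ ℓ ⊆ zeroSet g} := by
  have hcross := incidences_zeroSet_le (P := P) (L := {ℓ ∈ L | ¬ ℓ ⊆ zeroSet g})
    (fun ℓ hℓ => hL ℓ (mem_filter.1 hℓ).1) g fun ℓ hℓ => (mem_filter.1 hℓ).2
  have hempty : Incidences {x ∈ P | x ∉ zeroSet g} {ℓ ∈ L | ℓ ⊆ zeroSet g} = 0 := by
    rw [Incidences, card_eq_zero, filter_eq_empty_iff]
    rintro ⟨x, ℓ⟩ hxℓ hx
    obtain ⟨hxP, hℓL⟩ := mem_product.1 hxℓ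
    exact (mem_filter.1 hxP).2 ((mem_filter.1 hℓL).2 hx)
  rw [incidences_eq_add_filter_points P L fun x => x ∈ zeroSet g,
    incidences_eq_add_filter_lines {x ∈ P | x ∈ zeroSet g} L fun ℓ => ℓ ⊆ zeroSet g,
    incidences_eq_add_filter_lines {x ∈ P | x ∉ zeroSet g} L fun ℓ => ℓ ⊆ zeroSet g]
  omega

lemma incidences_le_add_incidences_zeroSet (P : Finset (Fin d → ℝ)) (hL : ∀ ℓ ∈ L, IsLine ℓ)
    (g : MvPolynomial (Fin d) ℝ) :
    Incidences P L ≤ Incidences {x ∈ P | x ∉ zeroSet g} L + #L * g.totalDegree +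
      Incidences {x ∈ P | x ∈ zeroSet g} {ℓ ∈ L | ℓ ⊆ zeroSet g} := by
  have hcard : #{ℓ ∈ L | ¬ ℓ ⊆ zeroSet g} * g.totalDegree ≤ #L * g.totalDegree :=
    Nat.mul_le_mul_right _ (card_filter_le _ _)
  have hmono : Incidences {x ∈ P | x ∉ zeroSet g} {ℓ ∈ L | ¬ ℓ ⊆ zeroSet g} ≤
      Incidences {x ∈ P | x ∉ zeroSet g} L := incidences_mono subset_rfl (filter_subset _ _)
  have hsplit := incidences_le_of_zeroSet P hL g
  omega

end CellIncidences

section AffinePolynomials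

open MvPolynomial
open scoped Matrix

variable {σ K : Type*} [Fintype σ] [Field K]

/-- The polynomial `∑ aᵢ Xᵢ + c` of degree at most one. -/
def affinePoly (a : σ → K) (c : K) : MvPolynomial σ K :=
  ∑ i, C (a i) * X i + C c

lemma eval_affinePoly (a : σ → K) (c : K) (x : σ → K) :
    eval x (affinePoly a c) = a ⬝ᵥ x + c := by
  simp [affinePoly, dotProduct]

lemma totalDegree_affinePoly_le (a : σ → K) (c : K) : (affinePoly a c).totalDegree ≤ 1 := by
  refine (totalDegree_add _ _).trans (max_le ?_ (by simp))
  exact totalDegree_finsetSum_le fun i _ => (totalDegree_mul _ _).trans (by simp)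

lemma coeff_single_affinePoly (a : σ → K) (c : K) (i : σ) :
    coeff (Finsupp.single i 1) (affinePoly a c) = a i := by
  simp [affinePoly, coeff_sum, coeff_C_mul, coeff_X, coeff_C, Finsupp.single_left_inj,
    eq_comm (a := (0 : σ →₀ ℕ))]

lemma totalDegree_affinePoly {a : σ → K} (ha : a ≠ 0) (c : K) :
    (affinePoly a c).totalDegree = 1 := by
  obtain ⟨i, hi⟩ := Function.ne_iff.1 ha
  refine (totalDegree_affinePoly_le a c).antisymm ?_
  simpa using le_totalDegree (mem_support_iff.2 ((coeff_single_affinePoly a c i).trans_ne hi))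

lemma affinePoly_ne_zero {a : σ → K} (ha : a ≠ 0) (c : K) : affinePoly a c ≠ 0 := by
  intro h
  simpa [h] using totalDegree_affinePoly ha c

/-- Solving `∑ aᵢ Xᵢ + c = 0` for one variable turns `f` into the zero polynomial without changing
it modulo `∑ aᵢ Xᵢ + c`. -/
theorem affinePoly_dvd [Infinite K] {a : σ → K} (ha : a ≠ 0) {c : K} {f : MvPolynomial σ K}
    (hf : ∀ x, a ⬝ᵥ x + c = 0 → eval x f = 0) : affinePoly a c ∣ f := by
  obtain ⟨i, hi⟩ := Function.ne_iff.1 ha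
  let w : σ → MvPolynomial σ K := X - Pi.single i (C (a i)⁻¹ * affinePoly a c)
  have hsolve (x : σ → K) : a ⬝ᵥ (fun j => eval x (w j)) + c = 0 := by
    have hw : (fun j => eval x (w j)) = x - Pi.single i ((a i)⁻¹ * (a ⬝ᵥ x + c)) := by
      ext j
      obtain rfl | hj := eq_or_ne j i <;> simp [w, eval_affinePoly, *]
    rw [hw, dotProduct_sub, dotProduct_single, mul_inv_cancel_left₀ hi]
    ring
  have hzero : aeval w f = 0 := by
    refine MvPolynomial.funext fun x => ?_
    rw [map_zero, ← coe_aeval_eq_eval, RingHom.coe_coe, ← AlgHom.comp_apply, comp_aeval]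
    exact hf _ (hsolve x)
  let π := Ideal.Quotient.mkₐ K (Ideal.span {affinePoly a c})
  have hπ : π.comp (aeval w) = π := by
    refine algHom_ext fun j => ?_
    have hgen : π (affinePoly a c) = 0 :=
      Ideal.Quotient.eq_zero_iff_mem.2 (Ideal.mem_span_singleton_self _)
    obtain rfl | hj := eq_or_ne j i <;> simp [w, *]
  have hπf : π f = 0 := by
    rw [← hπ, AlgHom.comp_apply, hzero, map_zero]
  exact Ideal.mem_span_singleton.1 (Ideal.Quotient.eq_zero_iff_mem.1 hπf)

end AffinePolynomials

section PlanarLines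

open Finset MvPolynomial

variable {P : Finset (Fin 2 → ℝ)} {L : Finset (Set (Fin 2 → ℝ))} {ℓ : Set (Fin 2 → ℝ)}

lemma IsLine.exists_eq_zeroSet_affinePoly (hℓ : IsLine ℓ) :
    ∃ a c, a ≠ 0 ∧ ℓ = zeroSet (affinePoly a c) := by
  obtain ⟨p, v, hv, rfl⟩ := hℓ.exists_eq_paramLine
  have hsq : v 0 ^ 2 + v 1 ^ 2 ≠ 0 := fun h => hv <| by
    ext i
    fin_cases i <;> simp <;> nlinarith [sq_nonneg (v 0), sq_nonneg (v 1)]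
  refine ⟨![-v 1, v 0], v 1 * p 0 - v 0 * p 1, fun h => hsq ?_, ?_⟩
  · have h0 := congrFun h 0
    have h1 := congrFun h 1
    simp only [Matrix.cons_val_zero, Matrix.cons_val_one, Pi.zero_apply, neg_eq_zero] at h0 h1
    rw [h0, h1]
    norm_num
  ext x
  simp only [zeroSet, Set.mem_ofPred_eq, eval_affinePoly, dotProduct, Fin.sum_univ_two,
    Matrix.cons_val_zero, Matrix.cons_val_one]
  constructor
  · rintro ⟨t, rfl⟩
    simp only [Pi.add_apply, Pi.smul_apply, smul_eq_mul]
    ring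
  · intro h
    refine ⟨((x 0 - p 0) * v 0 + (x 1 - p 1) * v 1) / (v 0 ^ 2 + v 1 ^ 2), ?_⟩
    ext i
    fin_cases i <;> simp only [Fin.zero_eta, Fin.mk_one, Pi.add_apply, Pi.smul_apply, smul_eq_mul]
      <;> field_simp
    · linear_combination (-v 1) * h
    · linear_combination v 0 * h

lemma card_le_totalDegree_of_subset_zeroSet (hL : ∀ ℓ ∈ L, IsLine ℓ)
    {f : MvPolynomial (Fin 2) ℝ} (hf : f ≠ 0) (hLf : ∀ ℓ ∈ L, ℓ ⊆ zeroSet f) :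
    #L ≤ f.totalDegree := by
  induction L using Finset.induction_on generalizing f with
  | empty => simp
  | insert ℓ L hℓL ih =>
    rw [forall_mem_insert] at hL hLf
    obtain ⟨a, c, ha, rfl⟩ := hL.1.exists_eq_zeroSet_affinePoly
    obtain ⟨g, rfl⟩ := affinePoly_dvd ha fun x hx => hLf.1 ((eval_affinePoly a c x).trans hx)
    have hg := right_ne_zero_of_mul hf
    rw [card_insert_of_notMem hℓL, add_comm,
      totalDegree_mul_of_isDomain (affinePoly_ne_zero ha c) hg, totalDegree_affinePoly ha]
    gcongr
    refine ih hL.2 hg fun ℓ' hℓ' => ?_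
    refine ((hL.2 ℓ' hℓ').subset_zeroSet_mul_iff.1 (hLf.2 ℓ' hℓ')).resolve_left fun hsub => ?_
    exact hℓL ((hL.2 ℓ' hℓ').eq_of_subset hL.1 hsub ▸ hℓ')

lemma incidences_plane_le_two_pow (P : Finset (Fin 2 → ℝ)) (hL : ∀ ℓ ∈ L, IsLine ℓ) (k : ℕ) :
    (Incidences P L : ℝ) ≤ 385920 * #L * 2 ^ k + #P ^ 2 / (2 ^ k) ^ 2 + #P + #L := by
  obtain ⟨gs, hgs, hdeg, hcell⟩ := exists_polynomial_partition two_pos P k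
  have hcurve : Incidences {x ∈ P | x ∈ zeroSet gs.prod} {ℓ ∈ L | ℓ ⊆ zeroSet gs.prod} ≤
      #P + #L * gs.prod.totalDegree := by
    have hL' : ∀ ℓ ∈ ({ℓ ∈ L | ℓ ⊆ zeroSet gs.prod} : Finset _), IsLine ℓ :=
      fun ℓ hℓ => hL ℓ (mem_filter.1 hℓ).1
    refine (incidences_le_card_points_add_sq _ hL').trans ?_
    rw [sq]
    gcongr
    · exact filter_subset _ _
    · exact filter_subset _ _
    · exact card_le_totalDegree_of_subset_zeroSet hL' hgs fun ℓ hℓ => (mem_filter.1 hℓ).2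
  have hcells := incidences_notMem_zeroSet_le hL (P := P) (gs := gs)
    (α := #P / (2 ^ 2) ^ k) (β := 1) zero_le_one fun C hC => by
      obtain ⟨x, -, -, rfl⟩ := mem_cells_iff.1 hC
      set C := cellOf P gs x
      have hCL : (Incidences C {ℓ ∈ L | ∃ x ∈ C, x ∈ ℓ} : ℝ) ≤
          #{ℓ ∈ L | ∃ x ∈ C, x ∈ ℓ} + #C * #C := mod_cast sq #C ▸
        incidences_le_card_lines_add_sq C fun ℓ hℓ => hL ℓ (mem_filter.1 hℓ).1
      refine hCL.trans ?_
      rw [one_mul, add_comm]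
      gcongr
      exact hcell x
  have htotal : (Incidences P L : ℝ) ≤
      Incidences {x ∈ P | x ∉ zeroSet gs.prod} L +
        #L * gs.prod.totalDegree + (#P + #L * gs.prod.totalDegree) :=
    mod_cast (incidences_le_add_incidences_zeroSet P hL gs.prod).trans
      (Nat.add_le_add_left hcurve _)
  have hLdeg : (#L * gs.prod.totalDegree : ℝ) ≤ #L * (128640 * 2 ^ k) := by
    gcongr
    exact hdeg.trans_eq (by norm_num)
  have hpow : (#P : ℝ) / (2 ^ 2) ^ k * #{x ∈ P | x ∉ zeroSet gs.prod} ≤ #P ^ 2 / (2 ^ k) ^ 2 := by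
    rw [sq (#P : ℝ), ← pow_mul, ← pow_mul, mul_comm 2 k, mul_div_right_comm]
    gcongr
    exact filter_subset _ _
  linarith

/-- Partitioning with about `s²` cells; minimising over `s` gives the usual
Szemerédi–Trotter bound. -/
theorem incidences_plane_le (P : Finset (Fin 2 → ℝ)) (hL : ∀ ℓ ∈ L, IsLine ℓ) {s : ℝ}
    (hs : 0 < s) :
    (Incidences P L : ℝ) ≤ 385920 * #L * s + 4 * #P ^ 2 / s ^ 2 + #P + #L := by
  rcases lt_or_ge s 1 with hs1 | hs1
  · have htrivial : (Incidences P L : ℝ) ≤ #L + #P ^ 2 :=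
      mod_cast incidences_le_card_lines_add_sq P hL
    have hsq : (#P : ℝ) ^ 2 ≤ 4 * #P ^ 2 / s ^ 2 := by
      rw [le_div_iff₀ (by positivity), mul_comm]
      gcongr
      nlinarith
    have : (0 : ℝ) ≤ 385920 * #L * s := by positivity
    linarith [(#P).cast_nonneg (α := ℝ)]
  · obtain ⟨k, hk, hk'⟩ := exists_nat_pow_near hs1 (one_lt_two (α := ℝ))
    have hsq : (#P : ℝ) ^ 2 / (2 ^ k) ^ 2 ≤ 4 * #P ^ 2 / s ^ 2 := by
      rw [div_le_div_iff₀ (by positivity) (by positivity)]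
      calc (#P : ℝ) ^ 2 * s ^ 2 ≤ #P ^ 2 * (2 ^ (k + 1)) ^ 2 := by gcongr
        _ = _ := by ring
    calc (Incidences P L : ℝ)
        ≤ 385920 * #L * 2 ^ k + #P ^ 2 / (2 ^ k) ^ 2 + #P + #L :=
          incidences_plane_le_two_pow P hL k
      _ ≤ _ := by gcongr

end PlanarLines

section GenericProjection

open Module

variable {d : ℕ} {ℓ ℓ' : Set (Fin d → ℝ)}

lemma IsLine.collinear (hℓ : IsLine ℓ) : Collinear ℝ ℓ := by
  obtain ⟨a, v, -, rfl⟩ := hℓ.exists_eq_paramLine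
  refine (collinear_iff_of_mem (left_mem_paramLine a v)).2 ⟨v, ?_⟩
  rintro _ ⟨t, rfl⟩
  exact ⟨t, by rw [vadd_eq_add, add_comm]⟩

lemma IsLine.image {e : ℕ} (hℓ : IsLine ℓ) {T : (Fin d → ℝ) →ₗ[ℝ] (Fin e → ℝ)}
    (hT : Set.InjOn T ℓ) : IsLine (T '' ℓ) := by
  obtain ⟨a, v, hv, rfl⟩ := hℓ.exists_eq_paramLine
  have hTv : T v ≠ 0 := fun h => hv <| by
    have := hT (left_mem_paramLine a v) ⟨1, rfl⟩ (by simp [h])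
    simpa using this
  convert isLine_paramLine (T a) hTv
  ext x
  constructor
  · rintro ⟨_, ⟨t, rfl⟩, rfl⟩
    exact ⟨t, by simp⟩
  · rintro ⟨t, rfl⟩
    exact ⟨a + t • v, ⟨t, rfl⟩, by simp⟩

/-- Project along a direction outside the finitely many proper subspaces spanned by the sets. -/
lemma exists_linearMap_forall_injOn (hd : 2 ≤ d) {ι : Type*} [Finite ι]
    {S : ι → Set (Fin (d + 1) → ℝ)} (hS : ∀ i, Coplanar ℝ (S i)) :
    ∃ T : (Fin (d + 1) → ℝ) →ₗ[ℝ] (Fin d → ℝ), ∀ i, Set.InjOn T (S i) := by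
  let W : Option ι → Submodule ℝ (Fin (d + 1) → ℝ) := fun i => i.elim ⊥ fun i => vectorSpan ℝ (S i)
  have hW (i) : W i ≠ ⊤ := by
    refine fun htop => lt_irrefl (finrank ℝ (W i)) ?_
    have hdim : finrank ℝ (W i) ≤ 2 := by
      cases i with
      | none => exact (finrank_bot ℝ _).trans_le zero_le_two
      | some i => exact (hS i).finrank_le_two
    rw [htop, finrank_top, finrank_fin_fun] at hdim
    omega
  obtain ⟨w, hw⟩ : ∃ w, ∀ i, w ∉ W i := by
    by_contra! hcover
    obtain ⟨i, hi⟩ := Subspace.exists_eq_top_of_iUnion_eq_univ (k := ℝ) (p := W)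
      (Set.eq_univ_of_forall fun x => Set.mem_iUnion.2 (hcover x))
    exact hW i hi
  have hw0 : w ≠ 0 := by simpa [W] using hw none
  have hquot : finrank ℝ ((Fin (d + 1) → ℝ) ⧸ ℝ ∙ w) = finrank ℝ (Fin d → ℝ) := by
    have := (ℝ ∙ w).finrank_quotient_add_finrank
    rw [finrank_span_singleton hw0, finrank_fin_fun] at this
    rw [finrank_fin_fun]
    omega
  let e := LinearEquiv.ofFinrankEq _ _ hquot
  refine ⟨e.toLinearMap ∘ₗ (ℝ ∙ w).mkQ, fun i x hx y hy hxy => ?_⟩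
  have hker : x - y ∈ ℝ ∙ w := (Submodule.Quotient.eq _).1 (e.injective hxy)
  have hspan : x - y ∈ vectorSpan ℝ (S i) := vsub_mem_vectorSpan ℝ hx hy
  exact sub_eq_zero.1 (Submodule.disjoint_def.1
    (Submodule.disjoint_span_singleton_of_notMem (hw (some i))) _ hspan hker)

lemma IsLine.exists_mem_notMem (hℓ : IsLine ℓ) (hℓ' : IsLine ℓ') (h : ℓ ≠ ℓ') :
    ∃ q ∈ ℓ, q ∉ ℓ' :=
  Set.not_subset.1 fun hsub => h (hℓ.eq_of_subset hℓ' hsub)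

lemma exists_generic_projection (hd : 2 ≤ d) (P : Finset (Fin (d + 1) → ℝ))
    {L : Finset (Set (Fin (d + 1) → ℝ))} (hL : ∀ ℓ ∈ L, IsLine ℓ) :
    ∃ T : (Fin (d + 1) → ℝ) →ₗ[ℝ] (Fin d → ℝ), Set.InjOn T P ∧ (∀ ℓ ∈ L, Set.InjOn T ℓ) ∧
      Set.InjOn (fun ℓ => T '' ℓ) (L : Set (Set (Fin (d + 1) → ℝ))) := by
  have hq : ∀ ℓ ∈ L, ∀ ℓ' ∈ L, ℓ ≠ ℓ' → ∃ q ∈ ℓ, q ∉ ℓ' :=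
    fun ℓ hℓ ℓ' hℓ' => (hL ℓ hℓ).exists_mem_notMem (hL ℓ' hℓ')
  choose! q hqmem hqnot using hq
  obtain ⟨T, hT⟩ := exists_linearMap_forall_injOn hd (ι := (P × P) ⊕ (L × L))
    (S := Sum.elim (fun x => {x.1.1, x.2.1}) fun ℓ => insert (q ℓ.1 ℓ.2) ℓ.2.1) (by
      rintro (x | ℓ)
      · exact coplanar_pair ℝ _ _
      · exact (hL _ ℓ.2.2).collinear.coplanar_insert _)
  refine ⟨T, fun x hx y hy hxy => ?_, fun ℓ hℓ => ?_, fun ℓ hℓ ℓ' hℓ' heq => ?_⟩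
  · exact hT (.inl (⟨x, hx⟩, ⟨y, hy⟩)) (.inl rfl) (.inr rfl) hxy
  · exact (hT (.inr (⟨ℓ, hℓ⟩, ⟨ℓ, hℓ⟩))).mono (Set.subset_insert _ _)
  · by_contra hne
    obtain ⟨x, hx, hTx⟩ := heq.subset (Set.mem_image_of_mem T (hqmem ℓ hℓ ℓ' hℓ' hne))
    exact hqnot ℓ hℓ ℓ' hℓ' hne
      (hT (.inr (⟨ℓ, hℓ⟩, ⟨ℓ', hℓ'⟩)) (.inr hx) (.inl rfl) hTx ▸ hx)

end GenericProjection

section SzemerediTrotter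

open Finset

variable {d : ℕ} {L : Finset (Set (Fin d → ℝ))}

lemma incidences_le_image {e : ℕ} {P : Finset (Fin d → ℝ)} {f : (Fin d → ℝ) → (Fin e → ℝ)}
    (hP : Set.InjOn f P) (hL : Set.InjOn (fun ℓ => f '' ℓ) (L : Set (Set (Fin d → ℝ)))) :
    Incidences P L ≤ Incidences (P.image f) (L.image fun ℓ => f '' ℓ) := by
  refine card_le_card_of_injOn (Prod.map f fun ℓ => f '' ℓ) (fun x hx => ?_)
    ((hP.prodMap hL).mono fun x hx => mem_product.1 (mem_filter.1 hx).1)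
  obtain ⟨hmem, hinc⟩ := mem_filter.1 hx
  rw [mem_product] at hmem
  exact mem_filter.2 ⟨mem_product.2 ⟨mem_image_of_mem _ hmem.1, mem_image_of_mem _ hmem.2⟩,
    Set.mem_image_of_mem f hinc⟩

theorem incidences_le (hd : 2 ≤ d) (P : Finset (Fin d → ℝ)) (hL : ∀ ℓ ∈ L, IsLine ℓ) {s : ℝ}
    (hs : 0 < s) :
    (Incidences P L : ℝ) ≤ 385920 * #L * s + 4 * #P ^ 2 / s ^ 2 + #P + #L := by
  induction d, hd using Nat.le_induction with
  | base => exact incidences_plane_le P hL hs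
  | succ d hd ih =>
    obtain ⟨T, hTP, hTℓ, hTL⟩ := exists_generic_projection hd P hL
    have himage := ih (P.image T) (L := L.image fun ℓ => T '' ℓ)
      (forall_mem_image.2 fun ℓ hℓ => (hL ℓ hℓ).image (hTℓ ℓ hℓ))
    rw [card_image_of_injOn hTP, card_image_of_injOn hTL] at himage
    exact (Nat.cast_le.2 (incidences_le_image hTP hTL)).trans himage

theorem incidences_le_of_card_points_le (hd : 2 ≤ d) {P : Finset (Fin d → ℝ)}
    (hL : ∀ ℓ ∈ L, IsLine ℓ) {X Y : ℝ} (hY : 0 < Y) (h : #P ≤ X * Y ^ 2) :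
    (Incidences P L : ℝ) ≤ 385920 * ((X + 1) * #P + (Y + 1) * #L) := by
  have hPX : (#P : ℝ) ^ 2 / Y ^ 2 ≤ X * #P := by
    rw [div_le_iff₀ (by positivity), sq]
    calc (#P : ℝ) * #P ≤ X * Y ^ 2 * #P := by gcongr
      _ = _ := by ring
  have hsq : 0 ≤ (#P : ℝ) ^ 2 / Y ^ 2 := by positivity
  have := incidences_le hd P hL hY
  rw [mul_div_assoc] at this
  linarith [(#P).cast_nonneg (α := ℝ), (#L).cast_nonneg (α := ℝ)]

theorem incidences_le_of_card_lines_le (hd : 2 ≤ d) (P : Finset (Fin d → ℝ))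
    (hL : ∀ ℓ ∈ L, IsLine ℓ) {X Y : ℝ} (hX : 0 ≤ X) (h : #L ≤ X ^ 2 * Y) :
    (Incidences P L : ℝ) ≤ 385920 * ((X + 1) * #P + (Y + 1) * #L) := by
  rcases L.eq_empty_or_nonempty with rfl | hLne
  · simp only [Incidences, product_empty, filter_empty, card_empty, Nat.cast_zero, mul_zero,
      add_zero]
    positivity
  have hn : (0 : ℝ) < #L := by exact_mod_cast hLne.card_pos
  have hXY : 0 < X ^ 2 * Y := hn.trans_le h
  have hX0 : 0 < X := hX.lt_of_ne' fun h0 => by simp [h0] at hXY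
  have hY0 : 0 < Y := pos_of_mul_pos_right hXY (sq_nonneg X)
  rcases P.eq_empty_or_nonempty with rfl | hPne
  · simp only [Incidences, empty_product, filter_empty, card_empty, Nat.cast_zero]
    positivity
  have hm : (0 : ℝ) < #P := by exact_mod_cast hPne.card_pos
  have hLs : (#L : ℝ) * (X * #P / #L) = X * #P := by field_simp
  have hPs : (#P : ℝ) ^ 2 / (X * #P / #L) ^ 2 ≤ Y * #L := by
    calc (#P : ℝ) ^ 2 / (X * #P / #L) ^ 2 = #L * #L / X ^ 2 := by field_simp
      _ ≤ X ^ 2 * Y * #L / X ^ 2 := by gcongr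
      _ = Y * #L := by field_simp
  have := incidences_le hd P hL (s := X * #P / #L) (by positivity)
  rw [mul_assoc, hLs, mul_div_assoc] at this
  have hsq : 0 ≤ (#P : ℝ) ^ 2 / (X * #P / #L) ^ 2 := by positivity
  linarith

end SzemerediTrotter

section BoundedMultiples

open Finset MvPolynomial
open Module (finrank)

lemma finrank_restrictTotalDegree (K : Type*) [Field K] (n k : ℕ) :
    finrank K (restrictTotalDegree (Fin n) K k) = (k + n).choose n := by
  refine (Module.finrank_eq_nat_card_basis (basisRestrictSupport K _)).trans ?_
  have hunion : {s : Fin n →₀ ℕ | (s.sum fun _ e => e) ≤ k} =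
      ((range (k + 1)).biUnion fun i => (univ : Finset (Fin n)).finsuppAntidiag i : Finset _) := by
    ext s
    simp [Finsupp.sum_fintype]
  rw [hunion, Nat.card_coe_set_eq, Set.ncard_coe_finset, card_biUnion]
  · simpa [card_finsuppAntidiag_nat_eq_multichoose] using Nat.sum_range_multichoose k n
  · intro i _ j _ hij
    refine disjoint_left.2 fun s hi hj => hij ?_
    exact (mem_finsuppAntidiag.1 hi).1.symm.trans (mem_finsuppAntidiag.1 hj).1

lemma finrank_map_add_finrank_le {K V W : Type*} [Field K] [AddCommGroup V] [Module K V]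
    [AddCommGroup W] [Module K W] (ρ : V →ₗ[K] W) {S T : Submodule K V} [FiniteDimensional K T]
    (hST : S ≤ T) (hS : S ≤ LinearMap.ker ρ) : finrank K (T.map ρ) + finrank K S ≤ finrank K T := by
  rw [← LinearMap.finrank_range_add_finrank_ker (ρ.domRestrict T), LinearMap.range_domRestrict,
    LinearMap.ker_domRestrict, ← (Submodule.comapSubtypeEquivOfLe hST).finrank_eq]
  exact Nat.add_le_add_left (Submodule.finrank_mono (Submodule.comap_mono hS)) _

variable {σ K : Type*} [Field K] {f g : MvPolynomial σ K}

/-- The space of multiples `f * h` of `f` with `h` of total degree at most `k`. -/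
def boundedMultiples (f : MvPolynomial σ K) (k : ℕ) : Submodule K (MvPolynomial σ K) :=
  (restrictTotalDegree σ K k).map (LinearMap.mulLeft K f)

instance [Finite σ] (f : MvPolynomial σ K) (k : ℕ) :
    FiniteDimensional K (boundedMultiples f k) :=
  Module.Finite.map _ _

lemma finrank_boundedMultiples (hf : f ≠ 0) (k : ℕ) :
    finrank K (boundedMultiples f k) = finrank K (restrictTotalDegree σ K k) :=
  (Submodule.equivMapOfInjective _ (mul_right_injective₀ hf) _).finrank_eq.symm

lemma boundedMultiples_le_restrictTotalDegree {k D : ℕ} (h : f.totalDegree + k ≤ D) :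
    boundedMultiples f k ≤ restrictTotalDegree σ K D := by
  rintro _ ⟨u, hu, rfl⟩
  rw [SetLike.mem_coe, mem_restrictTotalDegree] at hu
  rw [mem_restrictTotalDegree]
  exact (totalDegree_mul f u).trans ((Nat.add_le_add_left hu _).trans h)

lemma boundedMultiples_inf_le (hf : f ≠ 0) (hfg : IsRelPrime f g) (k k' : ℕ) :
    boundedMultiples f k' ⊓ boundedMultiples g (k + f.totalDegree) ≤
      boundedMultiples (g * f) k := by
  rintro _ ⟨⟨u, -, rfl⟩, ⟨w, hw, hwu⟩⟩
  rw [SetLike.mem_coe, mem_restrictTotalDegree] at hw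
  simp only [LinearMap.mulLeft_apply] at hwu
  obtain ⟨c, rfl⟩ : f ∣ w := hfg.dvd_of_dvd_mul_left ⟨u, hwu⟩
  refine ⟨c, ?_, by simpa [mul_assoc] using hwu⟩
  rw [SetLike.mem_coe, mem_restrictTotalDegree]
  obtain rfl | hc := eq_or_ne c 0
  · simp
  · rw [totalDegree_mul_of_isDomain hf hc] at hw
    lia

lemma le_finrank_boundedMultiples_sup [Finite σ] (hf : f ≠ 0) (hg : g ≠ 0) (hfg : IsRelPrime f g)
    (k : ℕ) :
    finrank K (restrictTotalDegree σ K (k + g.totalDegree)) +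
        finrank K (restrictTotalDegree σ K (k + f.totalDegree)) ≤
      finrank K ↥(boundedMultiples f (k + g.totalDegree) ⊔ boundedMultiples g (k + f.totalDegree)) +
        finrank K (restrictTotalDegree σ K k) := by
  rw [← finrank_boundedMultiples hf, ← finrank_boundedMultiples hg,
    ← Submodule.finrank_sup_add_finrank_inf_eq, ← finrank_boundedMultiples (mul_ne_zero hg hf) k]
  exact Nat.add_le_add_left (Submodule.finrank_mono (boundedMultiples_inf_le hf hfg _ _)) _

end BoundedMultiples

section RestrictionToLines

open Finset MvPolynomial
open Module (finrank)
open scoped Matrix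

variable {d : ℕ} {a v : Fin d → ℝ} {ℓ ℓ' : Set (Fin d → ℝ)}

lemma restrictLine_affinePoly (a v w : Fin d → ℝ) (c : ℝ) :
    restrictLine a v (affinePoly w c) =
      Polynomial.C (w ⬝ᵥ v) * Polynomial.X + Polynomial.C (w ⬝ᵥ a + c) := by
  refine Polynomial.funext fun t => ?_
  rw [eval_restrictLine, eval_affinePoly, dotProduct_add, dotProduct_smul]
  simp only [Polynomial.eval_add, Polynomial.eval_mul, Polynomial.eval_C, Polynomial.eval_X,
    smul_eq_mul]
  ring

lemma exists_restrictLine_eq_X (a : Fin d → ℝ) (hv : v ≠ 0) :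
    ∃ f : MvPolynomial (Fin d) ℝ, f.totalDegree ≤ 1 ∧ restrictLine a v f = Polynomial.X := by
  obtain ⟨j, hj⟩ := Function.ne_iff.1 hv
  refine ⟨affinePoly (Pi.single j (v j)⁻¹) (-((v j)⁻¹ * a j)), totalDegree_affinePoly_le _ _, ?_⟩
  rw [restrictLine_affinePoly, single_dotProduct, single_dotProduct, inv_mul_cancel₀ hj]
  simp

lemma IsLine.exists_separating_polynomial (hℓ : IsLine ℓ) (hℓ' : IsLine ℓ') (h : ℓ ≠ ℓ') :
    ∃ f : MvPolynomial (Fin d) ℝ, f.totalDegree ≤ 1 ∧ ¬ ℓ ⊆ zeroSet f ∧ ℓ' ⊆ zeroSet f := by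
  obtain ⟨p, hp, hp'⟩ := hℓ.exists_mem_notMem hℓ' h
  obtain ⟨a, v, -, rfl⟩ := hℓ'.exists_eq_paramLine
  have hpa : p - a ∉ Submodule.span ℝ {v} := by
    rw [Submodule.mem_span_singleton]
    rintro ⟨t, ht⟩
    exact hp' ⟨t, by rw [ht, add_sub_cancel]⟩
  obtain ⟨φ, hφ, hφv⟩ := Submodule.exists_le_ker_of_notMem hpa
  obtain ⟨w, rfl⟩ := (dotProductEquiv ℝ (Fin d)).surjective φ
  have hwv : w ⬝ᵥ v = 0 := hφv (Submodule.mem_span_singleton_self v)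
  have hwp : w ⬝ᵥ p - w ⬝ᵥ a ≠ 0 := by simpa [dotProduct_sub] using hφ
  refine ⟨affinePoly w (-(w ⬝ᵥ a)), totalDegree_affinePoly_le _ _, fun hsub => hwp ?_, ?_⟩
  · simpa [zeroSet, eval_affinePoly, sub_eq_add_neg] using hsub hp
  · rw [paramLine_subset_zeroSet_iff, restrictLine_affinePoly, hwv]
    simp

lemma totalDegree_aeval_le {f : MvPolynomial (Fin d) ℝ} (hf : f.totalDegree ≤ 1)
    (u : Polynomial ℝ) : (Polynomial.aeval f u).totalDegree ≤ u.natDegree := by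
  rw [Polynomial.aeval_eq_sum_range]
  refine totalDegree_finsetSum_le fun k hk => (totalDegree_smul_le _ _).trans ?_
  calc (f ^ k).totalDegree ≤ k * f.totalDegree := totalDegree_pow _ _
    _ ≤ k * 1 := by gcongr
    _ ≤ u.natDegree := by simpa [Nat.lt_succ_iff] using hk

variable {ι : Type*} [Fintype ι] {a v : ι → Fin d → ℝ}

lemma exists_isolating_polynomials (hv : ∀ i, v i ≠ 0)
    (hinj : Function.Injective fun i => paramLine (a i) (v i)) :
    ∃ f : ι → MvPolynomial (Fin d) ℝ, (∀ i, (f i).totalDegree ≤ Fintype.card ι) ∧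
      (∀ i, restrictLine (a i) (v i) (f i) ≠ 0) ∧
      ∀ i j, i ≠ j → restrictLine (a j) (v j) (f i) = 0 := by
  have hsep (i j : ι) : ∃ f : MvPolynomial (Fin d) ℝ, f.totalDegree ≤ 1 ∧
      (i ≠ j → restrictLine (a i) (v i) f ≠ 0 ∧ restrictLine (a j) (v j) f = 0) := by
    obtain rfl | hij := eq_or_ne i j
    · exact ⟨0, by simp, fun h => absurd rfl h⟩
    · obtain ⟨f, hf, hi, hj⟩ := (isLine_paramLine (a i) (hv i)).exists_separating_polynomial
        (isLine_paramLine (a j) (hv j)) (hinj.ne hij)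
      rw [paramLine_subset_zeroSet_iff] at hi hj
      exact ⟨f, hf, fun _ => ⟨hi, hj⟩⟩
  choose f hdeg hf using hsep
  refine ⟨fun i => ∏ j ∈ univ.erase i, f i j, fun i => ?_, fun i => ?_, fun i j hij => ?_⟩
  · refine (totalDegree_finsetProd _ _).trans ?_
    refine (sum_le_card_nsmul _ _ 1 fun j _ => hdeg i j).trans ?_
    simp
  · rw [map_prod, prod_ne_zero_iff]
    exact fun j hj => (hf i j (ne_of_mem_erase hj).symm).1
  · rw [map_prod]
    exact prod_eq_zero (mem_erase.2 ⟨hij.symm, mem_univ j⟩) (hf i j hij).2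

lemma exists_restrictLine_eq_mul (hv : ∀ i, v i ≠ 0)
    (hinj : Function.Injective fun i => paramLine (a i) (v i)) :
    ∃ q : ι → Polynomial ℝ, (∀ i, q i ≠ 0) ∧ ∀ (r : ℕ) (u : ι → Polynomial ℝ),
      (∀ i, (u i).natDegree ≤ r) → ∃ f : MvPolynomial (Fin d) ℝ,
        f.totalDegree ≤ Fintype.card ι + r ∧ ∀ i, restrictLine (a i) (v i) f = q i * u i := by
  obtain ⟨f, hdeg, hfi, hfj⟩ := exists_isolating_polynomials hv hinj
  choose x hx hxX using fun i => exists_restrictLine_eq_X (a i) (hv i)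
  refine ⟨fun i => restrictLine (a i) (v i) (f i), hfi, fun r u hu =>
    ⟨∑ i, f i * Polynomial.aeval (x i) (u i), ?_, fun j => ?_⟩⟩
  · refine totalDegree_finsetSum_le fun i _ => (totalDegree_mul _ _).trans ?_
    exact add_le_add (hdeg i) ((totalDegree_aeval_le (hx i) _).trans (hu i))
  · rw [map_sum, sum_eq_single j]
    · rw [map_mul, ← Polynomial.aeval_algHom_apply, hxX, Polynomial.aeval_X_left_apply]
    · intro i _ hij
      rw [map_mul, hfj i j hij, zero_mul]
    · simp

/-- The simultaneous restriction of a polynomial to a family of lines. -/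
def restrictLines (a v : ι → Fin d → ℝ) :
    MvPolynomial (Fin d) ℝ →ₗ[ℝ] ι → Polynomial ℝ :=
  LinearMap.pi fun i => (restrictLine (a i) (v i)).toLinearMap

lemma card_mul_le_finrank_map_restrictLines (hv : ∀ i, v i ≠ 0)
    (hinj : Function.Injective fun i => paramLine (a i) (v i)) (r : ℕ) :
    Fintype.card ι * (r + 1) ≤ finrank ℝ
      ((restrictTotalDegree (Fin d) ℝ (Fintype.card ι + r)).map (restrictLines a v)) := by
  obtain ⟨q, hq, hextend⟩ := exists_restrictLine_eq_mul hv hinj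
  let ψ : (ι → Polynomial.degreeLT ℝ (r + 1)) →ₗ[ℝ] ι → Polynomial ℝ :=
    LinearMap.pi fun i => LinearMap.mulLeft ℝ (q i) ∘ₗ
      (Polynomial.degreeLT ℝ (r + 1)).subtype ∘ₗ LinearMap.proj i
  have hψ_apply (u) (i : ι) : ψ u i = q i * u i := rfl
  have hψ : Function.Injective ψ := by
    intro u w huw
    funext i
    have hi : q i * u i = q i * w i := by rw [← hψ_apply, huw, hψ_apply]
    exact Subtype.ext (mul_left_cancel₀ (hq i) hi)
  have hrange : LinearMap.range ψ ≤
      (restrictTotalDegree (Fin d) ℝ (Fintype.card ι + r)).map (restrictLines a v) := by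
    rintro _ ⟨u, rfl⟩
    have hu (i : ι) : (u i : Polynomial ℝ).natDegree ≤ r := by
      have := Polynomial.mem_degreeLT.1 (u i).2
      exact Polynomial.natDegree_le_of_degree_le (Order.lt_succ_iff.1 this)
    obtain ⟨f, hf, hfu⟩ := hextend r _ hu
    exact ⟨f, (mem_restrictTotalDegree _ _ _).2 hf, funext hfu⟩
  calc Fintype.card ι * (r + 1) = finrank ℝ (ι → Polynomial.degreeLT ℝ (r + 1)) := by
        rw [Module.finrank_pi_fintype, (Polynomial.degreeLTEquiv ℝ (r + 1)).finrank_eq]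
        simp
    _ = finrank ℝ (LinearMap.range ψ) := (LinearMap.finrank_range_of_inj hψ).symm
    _ ≤ _ := Submodule.finrank_mono hrange

end RestrictionToLines

section LineBezout

open Finset MvPolynomial
open Module (finrank)

variable {d : ℕ} {ι : Type*} {a v : ι → Fin d → ℝ} {f g : MvPolynomial (Fin d) ℝ}

lemma boundedMultiples_le_ker_restrictLines (hf : ∀ i, restrictLine (a i) (v i) f = 0) (k : ℕ) :
    boundedMultiples f k ≤ LinearMap.ker (restrictLines a v) := by
  rintro _ ⟨u, -, rfl⟩
  refine LinearMap.mem_ker.2 (funext fun i => ?_)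
  change restrictLine (a i) (v i) (f * u) = 0
  rw [map_mul, hf, zero_mul]

lemma card_mul_add_choose_le [Fintype ι] (hv : ∀ i, v i ≠ 0)
    (hinj : Function.Injective fun i => paramLine (a i) (v i)) (hf0 : f ≠ 0) (hg0 : g ≠ 0)
    (hfg : IsRelPrime f g) (hf : ∀ i, restrictLine (a i) (v i) f = 0)
    (hg : ∀ i, restrictLine (a i) (v i) g = 0) {k r : ℕ}
    (hr : Fintype.card ι + r = k + f.totalDegree + g.totalDegree) :
    Fintype.card ι * (r + 1) + (k + g.totalDegree + d).choose d +
        (k + f.totalDegree + d).choose d ≤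
      (k + f.totalDegree + g.totalDegree + d).choose d + (k + d).choose d := by
  have hW : boundedMultiples f (k + g.totalDegree) ⊔ boundedMultiples g (k + f.totalDegree) ≤
      restrictTotalDegree (Fin d) ℝ (Fintype.card ι + r) :=
    sup_le (boundedMultiples_le_restrictTotalDegree (by lia))
      (boundedMultiples_le_restrictTotalDegree (by lia))
  have hker := finrank_map_add_finrank_le (restrictLines a v) hW
    (sup_le (boundedMultiples_le_ker_restrictLines hf _)
      (boundedMultiples_le_ker_restrictLines hg _))
  have hlines := card_mul_le_finrank_map_restrictLines hv hinj r
  have hmult := le_finrank_boundedMultiples_sup hf0 hg0 hfg k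
  rw [hr] at hker hlines
  simp only [finrank_restrictTotalDegree] at hker hmult
  lia

lemma six_mul_choose_three (k : ℕ) : 6 * (k + 3).choose 3 = (k + 1) * (k + 2) * (k + 3) := by
  have := Nat.ascFactorial_eq_factorial_mul_choose k 3
  simp only [Nat.ascFactorial, Nat.factorial] at this
  linarith

/-- Bézout for lines on two surfaces: two relatively prime polynomials have too few common
multiples of large degree for their ideal to vanish on too many lines. -/
theorem card_le_totalDegree_mul_totalDegree {f g : MvPolynomial (Fin 3) ℝ}
    {L : Finset (Set (Fin 3 → ℝ))} (hL : ∀ ℓ ∈ L, IsLine ℓ) (hf0 : f ≠ 0) (hg0 : g ≠ 0)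
    (hfg : IsRelPrime f g) (hf : ∀ ℓ ∈ L, ℓ ⊆ zeroSet f) (hg : ∀ ℓ ∈ L, ℓ ⊆ zeroSet g) :
    #L ≤ f.totalDegree * g.totalDegree := by
  choose a v hv hav using fun ℓ : L => (hL ℓ ℓ.2).exists_eq_paramLine
  set D := f.totalDegree
  set E := g.totalDegree
  by_contra! hcard
  let j := D * E * (2 * #L + 4 + D + E) + 1
  have hcount := card_mul_add_choose_le (k := #L + j) (r := j + D + E) hv
    (fun i j hij => Subtype.ext ((hav i).trans (hij.trans (hav j).symm))) hf0 hg0 hfg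
    (fun ℓ => paramLine_subset_zeroSet_iff.1 (hav ℓ ▸ hf ℓ ℓ.2))
    (fun ℓ => paramLine_subset_zeroSet_iff.1 (hav ℓ ▸ hg ℓ ℓ.2)) (by simp; lia)
  have hdiff : 2 * (#L * (j + D + E + 1)) ≤ D * E * (2 * (#L + j + 2) + D + E) := by
    rw [Fintype.card_coe] at hcount
    have h := Nat.mul_le_mul_left 6 hcount
    simp only [mul_add 6, six_mul_choose_three] at h
    zify at h ⊢
    linarith
  have hgrow : (D * E + 1) * j ≤ #L * (j + D + E + 1) := Nat.mul_le_mul hcard (by lia)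
  have hj : j ≤ D * E * (2 * #L + 4 + D + E) := by linarith
  exact Nat.not_succ_le_self _ hj

end LineBezout

section PDeriv

open MvPolynomial

variable {σ R : Type*} [CommRing R] {f : MvPolynomial σ R} {i : σ}

lemma pderiv_pderiv_comm (i j : σ) (f : MvPolynomial σ R) :
    pderiv i (pderiv j f) = pderiv j (pderiv i f) := by
  let D (k : σ) : Derivation R (MvPolynomial σ R) (MvPolynomial σ R) := pderiv k
  have h : ⁅D i, D j⁆ = 0 := by
    refine derivation_ext fun k => ?_
    simp [D, Derivation.commutator_apply, pderiv_X, Pi.single_apply, apply_ite]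
  have hf := Derivation.commutator_apply (D1 := D i) (D2 := D j) f
  rw [h, Derivation.zero_apply] at hf
  exact sub_eq_zero.1 hf.symm

lemma totalDegree_pderiv_lt (h : pderiv i f ≠ 0) :
    (pderiv i f).totalDegree < f.totalDegree := by
  obtain ⟨m, hm, hdeg⟩ := Finset.exists_mem_eq_sup (pderiv i f).support
    (support_nonempty.2 h) fun s => s.sum fun _ e => e
  rw [mem_support_iff, coeff_pderiv] at hm
  have hle := le_totalDegree (mem_support_iff.2 (left_ne_zero_of_mul hm))
  rw [Finsupp.sum_add_index' (by simp) (by simp), Finsupp.sum_single_index (by simp)] at hle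
  rw [totalDegree, hdeg]
  exact hle

lemma exists_pderiv_ne_zero [NoZeroDivisors R] [CharZero R] (hf : f.totalDegree ≠ 0) :
    ∃ i, pderiv i f ≠ 0 := by
  have hsupp : ¬ ∀ m ∈ f.support, ∀ i, m i = 0 := by rwa [← totalDegree_eq_zero_iff]
  push Not at hsupp
  obtain ⟨m, hm, i, hi⟩ := hsupp
  refine ⟨i, fun h => ?_⟩
  have hcoeff := coeff_pderiv (i := i) f (m - Finsupp.single i 1)
  rw [h, coeff_zero, tsub_add_cancel_of_le (Finsupp.single_le_iff.2 (Nat.one_le_iff_ne_zero.2 hi)),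
    eq_comm, mul_eq_zero] at hcoeff
  exact hcoeff.elim (mem_support_iff.1 hm) (Nat.cast_add_one_ne_zero _)

end PDeriv

section Gradient

open MvPolynomial Matrix

variable {d : ℕ} {a u v p : Fin d → ℝ} {f : MvPolynomial (Fin d) ℝ}

/-- The gradient of a polynomial at a point. -/
def polyGradient (f : MvPolynomial (Fin d) ℝ) (x : Fin d → ℝ) : Fin d → ℝ :=
  fun i => eval x (pderiv i f)

/-- The Hessian matrix of a polynomial at a point; its rows are the gradients of the partial
derivatives. -/
def polyHessian (f : MvPolynomial (Fin d) ℝ) (x : Fin d → ℝ) : Matrix (Fin d) (Fin d) ℝ :=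
  of fun i => polyGradient (pderiv i f) x

lemma polyHessian_isSymm (f : MvPolynomial (Fin d) ℝ) (x : Fin d → ℝ) : (polyHessian f x).IsSymm :=
  Matrix.ext fun i j => congrArg (eval x) (pderiv_pderiv_comm i j f)

lemma derivative_restrictLine (a v : Fin d → ℝ) (f : MvPolynomial (Fin d) ℝ) :
    (restrictLine a v f).derivative =
      ∑ i, Polynomial.C (v i) * restrictLine a v (pderiv i f) := by
  induction f using MvPolynomial.induction_on with
  | C r => simp [restrictLine]
  | add p q hp hq => simp [hp, hq, mul_add, Finset.sum_add_distrib]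
  | mul_X p j hp =>
    have hX : (restrictLine a v (X j)).derivative = Polynomial.C (v j) := by simp [restrictLine]
    have hsum : ∑ i, Polynomial.C (v i) * restrictLine a v (p * pderiv i (X j)) =
        restrictLine a v p * Polynomial.C (v j) := by
      rw [Finset.sum_eq_single j (fun i _ hij => by simp [pderiv_X_of_ne hij.symm]) (by simp),
        pderiv_X_self, mul_one, mul_comm]
    simp only [map_mul, Polynomial.derivative_mul, hp, hX, pderiv_mul, map_add, mul_add,
      Finset.sum_add_distrib, Finset.sum_mul, mul_assoc]
    simpa only [map_mul, mul_assoc, add_right_inj] using hsum.symm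

lemma eval_derivative_restrictLine (a v : Fin d → ℝ) (f : MvPolynomial (Fin d) ℝ) (t : ℝ) :
    (restrictLine a v f).derivative.eval t = polyGradient f (a + t • v) ⬝ᵥ v := by
  rw [derivative_restrictLine, Polynomial.eval_finsetSum, dotProduct_comm]
  simp_rw [Polynomial.eval_mul, Polynomial.eval_C, eval_restrictLine]
  rfl

lemma eval_derivative_restrictLine_pderiv (a v : Fin d → ℝ) (f : MvPolynomial (Fin d) ℝ) (t : ℝ)
    (i : Fin d) : (restrictLine a v (pderiv i f)).derivative.eval t =
      (polyHessian f (a + t • v) *ᵥ v) i :=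
  eval_derivative_restrictLine a v (pderiv i f) t

lemma polyGradient_dotProduct_eq_zero (h : restrictLine p u f = 0) : polyGradient f p ⬝ᵥ u = 0 := by
  have hderiv := eval_derivative_restrictLine p u f 0
  rw [h, Polynomial.derivative_zero, Polynomial.eval_zero, zero_smul, add_zero] at hderiv
  exact hderiv.symm

lemma dotProduct_polyHessian_mulVec_eq_zero (h : restrictLine p u f = 0) :
    u ⬝ᵥ (polyHessian f p *ᵥ u) = 0 := by
  have hderiv := congrArg (fun r => (r.derivative).eval 0) (derivative_restrictLine p u f)
  simp_rw [h, Polynomial.derivative_zero, Polynomial.derivative_sum, Polynomial.derivative_C_mul,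
    Polynomial.eval_finsetSum, Polynomial.eval_mul, Polynomial.eval_C, Polynomial.eval_zero,
    eval_derivative_restrictLine_pderiv, zero_smul, add_zero] at hderiv
  exact hderiv.symm

end Gradient

section Wronskian

open Polynomial

variable {K : Type*} [Field K] [CharZero K] {p q : K[X]}

lemma exists_eq_C_mul_of_wronskian_eq_zero (hq : q ≠ 0) (h : wronskian p q = 0) :
    ∃ c, p = C c * q := by
  obtain ⟨q', p', g, hrel, rfl, rfl⟩ := UniqueFactorizationMonoid.exists_reduced_factors q hq p
  have hw : g ^ 2 * wronskian p' q' = 0 := by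
    rw [← h]
    simp only [wronskian, derivative_mul]
    ring
  have hwronskian := (mul_eq_zero.1 hw).resolve_left (pow_ne_zero _ (left_ne_zero_of_mul hq))
  obtain ⟨hp', hq'⟩ := hrel.symm.isCoprime.wronskian_eq_zero_iff.1 hwronskian
  obtain ⟨r, rfl⟩ := natDegree_eq_zero.1 (derivative_eq_zero.1 hp')
  obtain ⟨s, rfl⟩ := natDegree_eq_zero.1 (derivative_eq_zero.1 hq')
  have hs : s ≠ 0 := by rintro rfl; simp at hq
  exact ⟨r / s, by rw [mul_left_comm, ← C_mul, div_mul_cancel₀ _ hs]⟩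

end Wronskian

section LinearAlgebra

open Matrix

lemma exists_smul_add_smul_eq {K : Type*} [Field K] {N v u x : Fin 3 → K} (hN : N ≠ 0)
    (hvu : LinearIndependent K ![v, u]) (hv : N ⬝ᵥ v = 0) (hu : N ⬝ᵥ u = 0) (hx : N ⬝ᵥ x = 0) :
    ∃ α β : K, α • v + β • u = x := by
  let φ := dotProductEquiv K (Fin 3) N
  have hφ : φ ≠ 0 := (dotProductEquiv K (Fin 3)).map_ne_zero_iff.2 hN
  have hker : Submodule.span K (Set.range ![v, u]) = LinearMap.ker φ := by
    refine Submodule.eq_of_le_of_finrank_eq ?_ ?_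
    · rw [Submodule.span_le, Set.range_subset_iff]
      intro i
      fin_cases i
      exacts [hv, hu]
    · have := Module.Dual.finrank_ker_add_one_of_ne_zero hφ
      rw [finrank_span_eq_card hvu, Fintype.card_fin]
      rw [Module.finrank_fin_fun] at this
      omega
  have hmem : x ∈ Submodule.span K (Set.range ![v, u]) := hker ▸ hx
  rwa [range_cons_cons_empty, Submodule.mem_span_pair] at hmem

variable {G v u w : Fin 3 → ℝ} {H : Matrix (Fin 3) (Fin 3) ℝ}

/-- On the plane `G⊥` the quadratic form of `H` vanishes in three directions, hence identically. -/
lemma exists_mulVec_eq_smul (hH : H.IsSymm) (hG : G ≠ 0) (hvu : LinearIndependent ℝ ![v, u])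
    (hvw : LinearIndependent ℝ ![v, w]) (huw : LinearIndependent ℝ ![u, w])
    (hGv : G ⬝ᵥ v = 0) (hGu : G ⬝ᵥ u = 0) (hGw : G ⬝ᵥ w = 0)
    (hv : v ⬝ᵥ (H *ᵥ v) = 0) (hu : u ⬝ᵥ (H *ᵥ u) = 0) (hw : w ⬝ᵥ (H *ᵥ w) = 0) :
    ∃ t : ℝ, H *ᵥ v = t • G := by
  obtain ⟨α, β, rfl⟩ := exists_smul_add_smul_eq hG hvu hGv hGu hGw
  have hα : α ≠ 0 := by
    rintro rfl
    exact (LinearIndependent.pair_iff' (huw.ne_zero 0)).1 huw β (by simp)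
  have hβ : β ≠ 0 := by
    rintro rfl
    exact (LinearIndependent.pair_iff' (hvw.ne_zero 0)).1 hvw α (by simp)
  have hsymm : v ⬝ᵥ (H *ᵥ u) = u ⬝ᵥ (H *ᵥ v) := by
    rw [dotProduct_mulVec, dotProduct_comm, ← mulVec_transpose, hH]
  have huv : u ⬝ᵥ (H *ᵥ v) = 0 := by
    simp only [mulVec_add, mulVec_smul, dotProduct_add, add_dotProduct, dotProduct_smul,
      smul_dotProduct, smul_eq_mul, hv, hu, hsymm] at hw
    have : 2 * (α * β) * (u ⬝ᵥ (H *ᵥ v)) = 0 := by linarith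
    simpa [hα, hβ] using this
  have hGG : G ⬝ᵥ G ≠ 0 := mt dotProduct_self_eq_zero.1 hG
  set y := H *ᵥ v - (G ⬝ᵥ (H *ᵥ v) / (G ⬝ᵥ G)) • G with hy
  have hGy : G ⬝ᵥ y = 0 := by
    rw [hy, dotProduct_sub, dotProduct_smul, smul_eq_mul, div_mul_cancel₀ _ hGG, sub_self]
  have hvy : v ⬝ᵥ y = 0 := by
    rw [hy, dotProduct_sub, dotProduct_smul, hv, dotProduct_comm v G, hGv]
    simp
  have huy : u ⬝ᵥ y = 0 := by
    rw [hy, dotProduct_sub, dotProduct_smul, huv, dotProduct_comm u G, hGu]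
    simp
  obtain ⟨γ, δ, hγδ⟩ := exists_smul_add_smul_eq hG hvu hGv hGu hGy
  have hyy : y ⬝ᵥ y = 0 := by
    nth_rw 1 [← hγδ]
    rw [add_dotProduct, smul_dotProduct, smul_dotProduct, hvy, huy, smul_zero, smul_zero, add_zero]
  exact ⟨_, sub_eq_zero.1 (hy ▸ dotProduct_self_eq_zero.1 hyy)⟩

end LinearAlgebra

section TriplePoints

open Finset MvPolynomial
open scoped Matrix

section

variable {d : ℕ} {a v w : Fin d → ℝ} {f : MvPolynomial (Fin d) ℝ} {S : Finset ℝ}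

lemma restrictLine_smul_eq_zero_iff {c : ℝ} (hc : c ≠ 0) :
    restrictLine a (c • v) f = 0 ↔ restrictLine a v f = 0 := by
  simp_rw [← paramLine_subset_zeroSet_iff, paramLine_smul hc]

lemma restrictLine_add_smul_eq_zero_iff (t : ℝ) :
    restrictLine (a + t • v) v f = 0 ↔ restrictLine a v f = 0 := by
  simp_rw [← paramLine_subset_zeroSet_iff, paramLine_eq_of_mem (add_smul_mem_paramLine a v t)]

lemma finite_setOf_not_injOn (S : Finset ℝ) (γ : ℝ → ℝ) :
    {s : ℝ | ¬ Set.InjOn (fun t => t + s * γ t) S}.Finite := by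
  refine ((S ×ˢ S).image fun p => (p.2 - p.1) / (γ p.1 - γ p.2)).finite_toSet.subset fun s hs => ?_
  simp only [Set.mem_ofPred_eq, Set.InjOn, not_forall] at hs
  obtain ⟨t, ht, t', ht', heq, hne⟩ := hs
  have hγ : γ t - γ t' ≠ 0 := fun h => hne (by linear_combination heq - s * h)
  refine mem_coe.2 (mem_image.2 ⟨(t, t'), mem_product.2 ⟨ht, ht'⟩, ?_⟩)
  rw [div_eq_iff hγ]
  linear_combination -heq

/-- All but finitely many parallels to the base line meet the given transversal lines in more than
`deg f` distinct points, so `f` vanishes on them. -/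
lemma eval_eq_zero_of_totalDegree_lt_card {γ : ℝ → ℝ}
    (hS : ∀ t ∈ S, restrictLine (a + t • v) (w + γ t • v) f = 0) (hcard : f.totalDegree < #S)
    (s t : ℝ) : eval (a + s • w + t • v) f = 0 := by
  have hparallel (s : ℝ) (hs : Set.InjOn (fun t => t + s * γ t) S) :
      restrictLine (a + s • w) v f = 0 := by
    refine Polynomial.eq_zero_of_natDegree_lt_card_of_eval_eq_zero' _
      (S.image fun t => t + s * γ t) (forall_mem_image.2 fun t ht => ?_) ?_
    · rw [eval_restrictLine, show a + s • w + (t + s * γ t) • v = a + t • v + s • (w + γ t • v)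
        by module, ← eval_restrictLine, hS t ht, Polynomial.eval_zero]
    · rw [card_image_of_injOn hs]
      exact (natDegree_restrictLine_le _ _ f).trans_lt hcard
  have htransversal : restrictLine (a + t • v) w f = 0 := by
    refine Polynomial.eq_zero_of_infinite_isRoot _ ((finite_setOf_not_injOn S γ).infinite_compl.mono
      fun s hs => ?_)
    rw [Set.mem_ofPred_eq, Polynomial.IsRoot.def, eval_restrictLine, add_right_comm,
      ← eval_restrictLine, hparallel s (not_not.1 hs), Polynomial.eval_zero]
  rw [add_right_comm, ← eval_restrictLine, htransversal, Polynomial.eval_zero]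

end

variable {a p v N : Fin 3 → ℝ} {f : MvPolynomial (Fin 3) ℝ} {S : Finset ℝ} {t : ℝ}

/-- The line through `p` with direction `v` is crossed at `p` by two further lines of the zero set
of `f`. -/
def IsTriplePoint (f : MvPolynomial (Fin 3) ℝ) (p v : Fin 3 → ℝ) : Prop :=
  ∃ u w, LinearIndependent ℝ ![v, u] ∧ LinearIndependent ℝ ![v, w] ∧ LinearIndependent ℝ ![u, w] ∧
    restrictLine p u f = 0 ∧ restrictLine p w f = 0

lemma IsTriplePoint.exists_polyHessian_mulVec_eq_smul (h : IsTriplePoint f p v)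
    (hv : restrictLine p v f = 0) (hG : polyGradient f p ≠ 0) :
    ∃ r : ℝ, polyHessian f p *ᵥ v = r • polyGradient f p := by
  obtain ⟨u, w, hvu, hvw, huw, hu, hw⟩ := h
  exact exists_mulVec_eq_smul (polyHessian_isSymm f p) hG hvu hvw huw
    (polyGradient_dotProduct_eq_zero hv) (polyGradient_dotProduct_eq_zero hu)
    (polyGradient_dotProduct_eq_zero hw) (dotProduct_polyHessian_mulVec_eq_zero hv)
    (dotProduct_polyHessian_mulVec_eq_zero hu) (dotProduct_polyHessian_mulVec_eq_zero hw)

lemma eval_wronskian_eq_zero (hf : restrictLine a v f = 0) (h : IsTriplePoint f (a + t • v) v)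
    (i j : Fin 3) : (Polynomial.wronskian (restrictLine a v (pderiv i f))
      (restrictLine a v (pderiv j f))).eval t = 0 := by
  have hgrad (i : Fin 3) : eval (a + t • v) (pderiv i f) = polyGradient f (a + t • v) i := rfl
  rw [Polynomial.wronskian, Polynomial.eval_sub, Polynomial.eval_mul, Polynomial.eval_mul,
    eval_derivative_restrictLine_pderiv, eval_derivative_restrictLine_pderiv,
    eval_restrictLine, eval_restrictLine, hgrad, hgrad]
  by_cases hG : polyGradient f (a + t • v) = 0
  · simp [hG]
  · obtain ⟨r, hr⟩ := h.exists_polyHessian_mulVec_eq_smul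
      ((restrictLine_add_smul_eq_zero_iff t).2 hf) hG
    rw [hr, Pi.smul_apply, Pi.smul_apply, smul_eq_mul, smul_eq_mul]
    ring

lemma card_le_totalDegree_of_normal (hN : N ≠ 0) (hNv : N ⬝ᵥ v = 0)
    (hf : ¬ affinePoly N (-(N ⬝ᵥ a)) ∣ f)
    (hS : ∀ t ∈ S, ∃ u, LinearIndependent ℝ ![v, u] ∧ N ⬝ᵥ u = 0 ∧
      restrictLine (a + t • v) u f = 0) : #S ≤ f.totalDegree := by
  by_contra! hcard
  obtain ⟨t₀, ht₀⟩ := card_pos.1 (Nat.zero_lt_of_lt hcard)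
  obtain ⟨w, hvw, hNw, -⟩ := hS t₀ ht₀
  have hslope : ∀ t ∈ S, ∃ γ : ℝ, restrictLine (a + t • v) (w + γ • v) f = 0 := by
    intro t ht
    obtain ⟨u, hvu, hNu, hu⟩ := hS t ht
    obtain ⟨α, β, rfl⟩ := exists_smul_add_smul_eq hN hvw hNv hNw hNu
    have hβ : β ≠ 0 := by
      rintro rfl
      exact (LinearIndependent.pair_iff' (hvu.ne_zero 0)).1 hvu α (by simp)
    refine ⟨α / β, ?_⟩
    rw [← restrictLine_smul_eq_zero_iff hβ, smul_add, smul_smul, mul_div_cancel₀ _ hβ]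
    rwa [add_comm (α • v)] at hu
  choose! γ hγ using hslope
  refine hf (affinePoly_dvd hN fun x hx => ?_)
  obtain ⟨t, s, hts⟩ := exists_smul_add_smul_eq hN hvw hNv hNw (x := x - a)
    (by rw [dotProduct_sub]; linarith)
  rw [show x = a + s • w + t • v by rw [add_assoc, add_comm (s • w), hts, add_sub_cancel]]
  exact eval_eq_zero_of_totalDegree_lt_card hγ hcard s t

lemma card_le_natDegree_of_forall_eval_eq_zero {R : Type*} [CommRing R] [IsDomain R]
    {p : Polynomial R} {S : Finset R} (hp : p ≠ 0) (hS : ∀ t ∈ S, p.eval t = 0) :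
    #S ≤ p.natDegree :=
  not_lt.1 fun h => hp (p.eq_zero_of_natDegree_lt_card_of_eval_eq_zero' S hS h)

lemma natDegree_restrictLine_pderiv_le (a v : Fin 3 → ℝ) (f : MvPolynomial (Fin 3) ℝ) (i : Fin 3) :
    (restrictLine a v (pderiv i f)).natDegree ≤ f.totalDegree := by
  refine (natDegree_restrictLine_le a v _).trans ?_
  obtain h | h := eq_or_ne (pderiv i f) 0
  · simp [h]
  · exact (totalDegree_pderiv_lt h).le

lemma card_triplePoints_le_of_wronskian_ne_zero (h0 : restrictLine a v f = 0) {i j : Fin 3}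
    (hij : (restrictLine a v (pderiv i f)).wronskian (restrictLine a v (pderiv j f)) ≠ 0)
    (hS : ∀ t ∈ S, IsTriplePoint f (a + t • v) v) : #S ≤ 2 * f.totalDegree := by
  have hcard := card_le_natDegree_of_forall_eval_eq_zero hij
    fun t ht => eval_wronskian_eq_zero h0 (hS t ht) i j
  have := Polynomial.natDegree_wronskian_lt_add hij
  have := natDegree_restrictLine_pderiv_le a v f i
  have := natDegree_restrictLine_pderiv_le a v f j
  omega

/-- If all Wronskians vanish then `∇f` has a constant direction along the line, so the further lines
through its smooth points all lie in one plane. -/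
lemma card_triplePoints_le_of_wronskian_eq_zero (hf : ∀ N c, N ≠ 0 → ¬ affinePoly N c ∣ f)
    (h0 : restrictLine a v f = 0) {k : Fin 3} (hk : restrictLine a v (pderiv k f) ≠ 0)
    (hW : ∀ i, (restrictLine a v (pderiv i f)).wronskian (restrictLine a v (pderiv k f)) = 0)
    (hS : ∀ t ∈ S, IsTriplePoint f (a + t • v) v) : #S ≤ 2 * f.totalDegree := by
  choose N hN using fun i => exists_eq_C_mul_of_wronskian_eq_zero hk (hW i)
  set q := restrictLine a v (pderiv k f)
  have hgrad (t : ℝ) : polyGradient f (a + t • v) = q.eval t • N := by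
    ext i
    rw [polyGradient, ← eval_restrictLine, hN]
    simp [mul_comm]
  have hNu {u : Fin 3 → ℝ} {t : ℝ} (ht : q.eval t ≠ 0) (hu : restrictLine (a + t • v) u f = 0) :
      N ⬝ᵥ u = 0 := by
    have := polyGradient_dotProduct_eq_zero hu
    rw [hgrad, smul_dotProduct, smul_eq_mul] at this
    exact (mul_eq_zero.1 this).resolve_left ht
  obtain ⟨t, ht⟩ : ∃ t, q.eval t ≠ 0 := by
    by_contra! h
    exact hk (Polynomial.funext fun t => by rw [h, Polynomial.eval_zero])
  have hN0 : N ≠ 0 := by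
    rintro rfl
    have hqt : q.eval t = 0 := by
      rw [eval_restrictLine]
      exact (congrFun (hgrad t) k).trans (by simp)
    exact ht hqt
  have hsingular : #{t ∈ S | q.eval t = 0} ≤ f.totalDegree :=
    (card_le_natDegree_of_forall_eval_eq_zero hk fun t ht => (mem_filter.1 ht).2).trans
      (natDegree_restrictLine_pderiv_le a v f k)
  have hsmooth : #{t ∈ S | ¬ q.eval t = 0} ≤ f.totalDegree := by
    refine card_le_totalDegree_of_normal (a := a) hN0 (hNu ht <|
      (restrictLine_add_smul_eq_zero_iff t).2 h0) (hf N _ hN0) fun s hs => ?_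
    obtain ⟨hsS, hqs⟩ := mem_filter.1 hs
    obtain ⟨u, -, hvu, -, -, hu, -⟩ := hS s hsS
    exact ⟨u, hvu, hNu hqs hu, hu⟩
  rw [← card_filter_add_card_filter_not fun t => q.eval t = 0]
  omega

theorem card_triplePoints_le (hf : ∀ N c, N ≠ 0 → ¬ affinePoly N c ∣ f)
    (h0 : restrictLine a v f = 0) {k : Fin 3} (hk : restrictLine a v (pderiv k f) ≠ 0)
    (hS : ∀ t ∈ S, IsTriplePoint f (a + t • v) v) : #S ≤ 2 * f.totalDegree := by
  by_cases hW : ∀ i,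
      (restrictLine a v (pderiv i f)).wronskian (restrictLine a v (pderiv k f)) = 0
  · exact card_triplePoints_le_of_wronskian_eq_zero hf h0 hk hW hS
  · push Not at hW
    exact hW.elim fun i hi => card_triplePoints_le_of_wronskian_ne_zero h0 hi hS

end TriplePoints

section SurfaceLines

open Finset MvPolynomial
open scoped Matrix

lemma linearIndependent_of_paramLine_ne {d : ℕ} {p u v : Fin d → ℝ} (hu : u ≠ 0) (hv : v ≠ 0)
    (h : paramLine p u ≠ paramLine p v) : LinearIndependent ℝ ![u, v] := by
  refine (LinearIndependent.pair_iff' hu).2 ?_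
  rintro c rfl
  exact h (paramLine_smul (left_ne_zero_of_smul hv)).symm

variable {f : MvPolynomial (Fin 3) ℝ} {P : Finset (Fin 3 → ℝ)} {L : Finset (Set (Fin 3 → ℝ))}
  {ℓ : Set (Fin 3 → ℝ)} {p v : Fin 3 → ℝ}

lemma isTriplePoint_of_three_le_card (hL : ∀ ℓ ∈ L, IsLine ℓ) (hLf : ∀ ℓ ∈ L, ℓ ⊆ zeroSet f)
    (hv : v ≠ 0) (hmem : paramLine p v ∈ L) (hcard : 3 ≤ #{ℓ ∈ L | p ∈ ℓ}) :
    IsTriplePoint f p v := by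
  have hother : 1 < #({ℓ ∈ L | p ∈ ℓ}.erase (paramLine p v)) := by
    rw [card_erase_of_mem (mem_filter.2 ⟨hmem, left_mem_paramLine p v⟩)]
    omega
  have hdir : ∀ ℓ ∈ {ℓ ∈ L | p ∈ ℓ}.erase (paramLine p v), ∃ u, u ≠ 0 ∧ ℓ = paramLine p u ∧
      LinearIndependent ℝ ![v, u] ∧ restrictLine p u f = 0 := by
    intro ℓ hℓ
    obtain ⟨hne, hℓ⟩ := mem_erase.1 hℓ
    obtain ⟨hℓL, hp⟩ := mem_filter.1 hℓ
    obtain ⟨a, u, hu, rfl⟩ := (hL ℓ hℓL).exists_eq_paramLine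
    rw [paramLine_eq_of_mem hp] at hne hℓL ⊢
    exact ⟨u, hu, rfl, linearIndependent_of_paramLine_ne hv hu hne.symm,
      paramLine_subset_zeroSet_iff.1 (hLf _ hℓL)⟩
  obtain ⟨ℓ₁, hℓ₁, ℓ₂, hℓ₂, hne⟩ := one_lt_card.1 hother
  obtain ⟨u, hu, rfl, hvu, hfu⟩ := hdir ℓ₁ hℓ₁
  obtain ⟨w, hw, rfl, hvw, hfw⟩ := hdir ℓ₂ hℓ₂
  exact ⟨u, w, hvu, hvw, linearIndependent_of_paramLine_ne hu hw hne, hfu, hfw⟩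

lemma card_filter_three_le_card_le (hf : ∀ N c, N ≠ 0 → ¬ affinePoly N c ∣ f)
    (hL : ∀ ℓ ∈ L, IsLine ℓ) (hLf : ∀ ℓ ∈ L, ℓ ⊆ zeroSet f) (hℓ : ℓ ∈ L) {k : Fin 3}
    (hk : ¬ ℓ ⊆ zeroSet (pderiv k f)) (P : Finset (Fin 3 → ℝ)) :
    #{p ∈ P | p ∈ ℓ ∧ 3 ≤ #{ℓ' ∈ L | p ∈ ℓ'}} ≤ 2 * f.totalDegree := by
  obtain ⟨a, v, hv, rfl⟩ := (hL ℓ hℓ).exists_eq_paramLine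
  have hparam : (({p ∈ P | p ∈ paramLine a v ∧ 3 ≤ #{ℓ' ∈ L | p ∈ ℓ'}} : Finset _) :
      Set (Fin 3 → ℝ)) ⊆ (fun t : ℝ => a + t • v) '' {t | 3 ≤ #{ℓ' ∈ L | a + t • v ∈ ℓ'}} := by
    intro p hp
    obtain ⟨-, ⟨t, rfl⟩, ht⟩ := mem_filter.1 hp
    exact ⟨t, ht, rfl⟩
  obtain ⟨S, hS, himage⟩ := subset_set_image_iff.1 hparam
  rw [← himage]
  refine card_image_le.trans (card_triplePoints_le hf (paramLine_subset_zeroSet_iff.1 (hLf _ hℓ))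
    (mt paramLine_subset_zeroSet_iff.2 hk) fun t ht => ?_)
  exact isTriplePoint_of_three_le_card hL hLf hv
    (paramLine_eq_of_mem (add_smul_mem_paramLine a v t) ▸ hℓ) (hS ht)

lemma exists_isPlane_zeroSet_subset (hf : Irreducible f) {N : Fin 3 → ℝ} (hN : N ≠ 0) {c : ℝ}
    (hdvd : affinePoly N c ∣ f) : ∃ π, IsPlane π ∧ zeroSet f ⊆ π := by
  refine ⟨_, ⟨N, c, hN, rfl⟩, fun x hx => ?_⟩
  have hunit : ¬ IsUnit (affinePoly N c) := fun h => by
    have := (isUnit_iff_totalDegree_of_isReduced.1 h).2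
    rw [totalDegree_affinePoly hN] at this
    exact one_ne_zero this
  obtain ⟨g, hg⟩ := ((hf.dvd_iff.1 hdvd).resolve_left hunit).dvd
  change N ⬝ᵥ x + c = 0
  rw [← eval_affinePoly, hg, map_mul, show eval x f = 0 from hx, zero_mul]

lemma totalDegree_ne_zero_of_irreducible {σ K : Type*} [Field K] {f : MvPolynomial σ K}
    (hf : Irreducible f) : f.totalDegree ≠ 0 := by
  intro h
  rw [totalDegree_eq_zero_iff_eq_C] at h
  refine hf.not_isUnit (h ▸ (isUnit_iff_ne_zero.2 fun h0 => hf.ne_zero ?_).map C)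
  rw [h, h0, C_0]

lemma isRelPrime_pderiv_of_irreducible {σ K : Type*} [Field K] {f : MvPolynomial σ K}
    (hf : Irreducible f) {i : σ} (hi : pderiv i f ≠ 0) : IsRelPrime f (pderiv i f) :=
  hf.isRelPrime_iff_not_dvd.2 fun h =>
    (totalDegree_pderiv_lt hi).not_ge (totalDegree_le_of_dvd_of_isDomain h hi)

lemma exists_incidences_le_of_forall_not_affinePoly_dvd (hf : Irreducible f)
    (hplane : ∀ N c, N ≠ 0 → ¬ affinePoly N c ∣ f) (P : Finset (Fin 3 → ℝ))
    (hL : ∀ ℓ ∈ L, IsLine ℓ) (hLf : ∀ ℓ ∈ L, ℓ ⊆ zeroSet f) :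
    ∃ P' ⊆ P, ∃ L' ⊆ L, #L' ≤ f.totalDegree ^ 2 ∧
      Incidences P L ≤ #(P \ P') * 2 + #L * (2 * f.totalDegree) + Incidences P' L' := by
  obtain ⟨k, hk⟩ := exists_pderiv_ne_zero (totalDegree_ne_zero_of_irreducible hf)
  set P' := {p ∈ P | 3 ≤ #{ℓ ∈ L | p ∈ ℓ}} with hP'
  set L' := {ℓ ∈ L | ∀ i, ℓ ⊆ zeroSet (pderiv i f)} with hL'
  have hL'L : L' ⊆ L := filter_subset _ _
  refine ⟨P', filter_subset _ _, L', hL'L, ?_, ?_⟩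
  · have hbezout : #L' ≤ f.totalDegree * (pderiv k f).totalDegree :=
      card_le_totalDegree_mul_totalDegree (fun ℓ hℓ => hL ℓ (hL'L hℓ)) hf.ne_zero hk
        (isRelPrime_pderiv_of_irreducible hf hk) (fun ℓ hℓ => hLf ℓ (hL'L hℓ))
        fun ℓ hℓ => (mem_filter.1 hℓ).2 k
    rw [sq]
    exact hbezout.trans (Nat.mul_le_mul_left _ (totalDegree_pderiv_lt hk).le)
  · have hpoor : Incidences (P \ P') L ≤ #(P \ P') * 2 :=
      incidences_le_card_points_mul fun p hp => by
        simp only [hP', mem_sdiff, mem_filter, not_and, not_le] at hp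
        exact Nat.lt_succ_iff.1 (hp.2 hp.1)
    have hnoncritical : Incidences P' (L \ L') ≤ #(L \ L') * (2 * f.totalDegree) :=
      incidences_le_card_lines_mul fun ℓ hℓ => by
        simp only [hL', mem_sdiff, mem_filter, not_and, not_forall] at hℓ
        obtain ⟨i, hi⟩ := hℓ.2 hℓ.1
        simpa only [hP', filter_filter, and_comm] using
          card_filter_three_le_card_le hplane hL hLf hℓ.1 hi P
    have hcard := Nat.mul_le_mul_right (2 * f.totalDegree)
      (card_le_card (sdiff_subset : L \ L' ⊆ L))
    rw [← incidences_sdiff_add_incidences_points (filter_subset _ _ : P' ⊆ P) L,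
      ← incidences_sdiff_add_incidences_lines P' hL'L]
    lia

lemma incidences_add_incidences_le_union {d : ℕ} {P P' : Finset (Fin d → ℝ)}
    (hP : Disjoint P P') (L L' : Finset (Set (Fin d → ℝ))) :
    Incidences P L + Incidences P' L' ≤ Incidences (P ∪ P') (L ∪ L') := by
  rw [incidences_eq_sum_points (P ∪ P'), sum_union hP, ← incidences_eq_sum_points,
    ← incidences_eq_sum_points]
  exact add_le_add (incidences_mono subset_rfl subset_union_left)
    (incidences_mono subset_rfl subset_union_right)

end SurfaceLines

section SurfaceIncidences

open Finset MvPolynomial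

variable {P : Finset (Fin 3 → ℝ)} {L : Finset (Set (Fin 3 → ℝ))} {x y : ℝ}

/-- The incidence bound for points and lines on a surface of degree `D`, up to an exceptional
subconfiguration with few lines. With `x` and `y` as weights, each point outside `P'` costs `x + 1`
and each line costs `y + D`. -/
def HasSurfaceBound (x y : ℝ) (D : ℕ) (P : Finset (Fin 3 → ℝ)) (L : Finset (Set (Fin 3 → ℝ))) :
    Prop :=
  ∃ P' ⊆ P, ∃ L' ⊆ L, #L' ≤ D ^ 2 ∧ (Incidences P L : ℝ) ≤
    385920 * ((x + 1) * #(P \ P') + (y + D) * #L) + Incidences P' L'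

lemma card_sdiff_add_card_sdiff {α : Type*} {A A' B B' : Finset α} [DecidableEq α]
    (hA : A' ⊆ A) (hB : B' ⊆ B) (hAB : Disjoint A B) :
    #(A \ A') + #(B \ B') = #((A ∪ B) \ (A' ∪ B')) := by
  have hunion := card_union_of_disjoint hAB
  have hunion' := card_union_of_disjoint (hAB.mono hA hB)
  have hsub := card_le_card hA
  have hsub' := card_le_card hB
  rw [card_sdiff_of_subset hA, card_sdiff_of_subset hB,
    card_sdiff_of_subset (union_subset_union hA hB)]
  omega

lemma HasSurfaceBound.add {D : ℕ} {g : MvPolynomial (Fin 3) ℝ} (hL : ∀ ℓ ∈ L, IsLine ℓ)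
    (hg : HasSurfaceBound x y g.totalDegree {p ∈ P | p ∈ zeroSet g} {ℓ ∈ L | ℓ ⊆ zeroSet g})
    (hD : HasSurfaceBound x y D {p ∈ P | p ∉ zeroSet g} {ℓ ∈ L | ¬ ℓ ⊆ zeroSet g}) :
    HasSurfaceBound x y (g.totalDegree + D) P L := by
  have hsplit := incidences_le_of_zeroSet P hL g
  have hPdisj := disjoint_filter_filter_not P P fun p => p ∈ zeroSet g
  have hPunion := filter_union_filter_not_eq (fun p => p ∈ zeroSet g) P
  have hLcard := card_filter_add_card_filter_not (s := L) fun ℓ => ℓ ⊆ zeroSet g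
  have hLunion := filter_union_filter_not_eq (fun ℓ => ℓ ⊆ zeroSet g) L
  set P₁ := {p ∈ P | p ∈ zeroSet g}
  set P₂ := {p ∈ P | p ∉ zeroSet g}
  set L₁ := {ℓ ∈ L | ℓ ⊆ zeroSet g}
  set L₂ := {ℓ ∈ L | ¬ ℓ ⊆ zeroSet g}
  obtain ⟨P₁', hP₁', L₁', hL₁', hcard₁, hI₁⟩ := hg
  obtain ⟨P₂', hP₂', L₂', hL₂', hcard₂, hI₂⟩ := hD
  refine ⟨P₁' ∪ P₂', hPunion ▸ union_subset_union hP₁' hP₂', L₁' ∪ L₂',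
    hLunion ▸ union_subset_union hL₁' hL₂', ?_, ?_⟩
  · calc #(L₁' ∪ L₂') ≤ #L₁' + #L₂' := card_union_le _ _
      _ ≤ g.totalDegree ^ 2 + D ^ 2 := add_le_add hcard₁ hcard₂
      _ ≤ (g.totalDegree + D) ^ 2 := pow_add_pow_le zero_le zero_le two_ne_zero
  · rw [← hPunion, ← card_sdiff_add_card_sdiff hP₁' hP₂' hPdisj, hPunion, ← hLcard]
    have hcross : (0 : ℝ) ≤ g.totalDegree * #L₂ := by positivity
    have hcross' : (0 : ℝ) ≤ D * #L₁ := by positivity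
    calc (Incidences P L : ℝ)
        ≤ Incidences P₁ L₁ + #L₂ * g.totalDegree + Incidences P₂ L₂ := mod_cast hsplit
      _ ≤ 385920 * ((x + 1) * (#(P₁ \ P₁') + #(P₂ \ P₂')) + (y + (g.totalDegree + D)) *
            (#L₁ + #L₂)) + (Incidences P₁' L₁' + Incidences P₂' L₂') := by linarith
      _ ≤ 385920 * ((x + 1) * ↑(#(P₁ \ P₁') + #(P₂ \ P₂')) + (y + ↑(g.totalDegree + D)) *
            ↑(#L₁ + #L₂)) + Incidences (P₁' ∪ P₂') (L₁' ∪ L₂') := by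
        push_cast
        gcongr
        exact_mod_cast incidences_add_incidences_le_union (hPdisj.mono hP₁' hP₂') L₁' L₂'

variable {f : MvPolynomial (Fin 3) ℝ}

lemma hasSurfaceBound_of_irreducible (hf : Irreducible f) (P : Finset (Fin 3 → ℝ))
    (hL : ∀ ℓ ∈ L, IsLine ℓ) (hLf : ∀ ℓ ∈ L, ℓ ⊆ zeroSet f) (hx : 0 ≤ x) (hy : 0 ≤ y)
    (hplane : ∀ π, IsPlane π → (#{ℓ ∈ L | ℓ ⊆ π} : ℝ) ≤ x ^ 2 * y) :
    HasSurfaceBound x y f.totalDegree P L := by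
  by_cases hdvd : ∃ N c, N ≠ 0 ∧ affinePoly N c ∣ f
  · obtain ⟨N, c, hN, hdvd⟩ := hdvd
    obtain ⟨π, hπ, hfπ⟩ := exists_isPlane_zeroSet_subset hf hN hdvd
    have hLπ := hplane π hπ
    rw [filter_true_of_mem fun ℓ hℓ => (hLf ℓ hℓ).trans hfπ] at hLπ
    have hdeg : (1 : ℝ) ≤ f.totalDegree :=
      Nat.one_le_cast.2 (Nat.one_le_iff_ne_zero.2 (totalDegree_ne_zero_of_irreducible hf))
    refine ⟨∅, empty_subset _, ∅, empty_subset _, by simp, ?_⟩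
    calc (Incidences P L : ℝ) ≤ 385920 * ((x + 1) * #P + (y + 1) * #L) :=
          incidences_le_of_card_lines_le (by norm_num) P hL hx hLπ
      _ ≤ 385920 * ((x + 1) * #P + (y + f.totalDegree) * #L) := by gcongr
      _ ≤ _ := by rw [sdiff_empty]; exact le_add_of_nonneg_right (Nat.cast_nonneg _)
  · push Not at hdvd
    obtain ⟨P', hP', L', hL', hcard, hI⟩ :=
      exists_incidences_le_of_forall_not_affinePoly_dvd hf hdvd P hL hLf
    refine ⟨P', hP', L', hL', hcard, ?_⟩
    calc (Incidences P L : ℝ) ≤ #(P \ P') * 2 + #L * (2 * f.totalDegree) + Incidences P' L' := by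
          exact_mod_cast hI
      _ ≤ 385920 * ((x + 1) * #(P \ P') + (y + f.totalDegree) * #L) + Incidences P' L' := by
        have h₁ : 0 ≤ x * #(P \ P') := by positivity
        have h₂ : 0 ≤ y * #L := by positivity
        have h₃ : (0 : ℝ) ≤ f.totalDegree * #L := by positivity
        linarith [(Nat.cast_nonneg (#(P \ P')) : (0 : ℝ) ≤ _)]

theorem hasSurfaceBound_of_subset_zeroSet (hf : f ≠ 0) (hPf : ∀ p ∈ P, p ∈ zeroSet f)
    (hL : ∀ ℓ ∈ L, IsLine ℓ) (hLf : ∀ ℓ ∈ L, ℓ ⊆ zeroSet f) (hx : 0 ≤ x) (hy : 0 ≤ y)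
    (hplane : ∀ π, IsPlane π → (#{ℓ ∈ L | ℓ ⊆ π} : ℝ) ≤ x ^ 2 * y) :
    HasSurfaceBound x y f.totalDegree P L := by
  induction f using WfDvdMonoid.induction_on_irreducible generalizing P L with
  | zero => exact absurd rfl hf
  | unit u hu =>
    obtain rfl : P = ∅ := eq_empty_of_forall_notMem fun p hp =>
      (hu.map (MvPolynomial.eval p)).ne_zero (hPf p hp)
    refine ⟨∅, subset_rfl, ∅, empty_subset _, by simp, ?_⟩
    simp only [Incidences, empty_product, filter_empty, card_empty, Nat.cast_zero, sdiff_empty]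
    positivity
  | mul g i hg hi ih =>
    have hrestrict {L₀ : Finset (Set (Fin 3 → ℝ))} (hL₀ : L₀ ⊆ L) (π) (hπ : IsPlane π) :
        (#{ℓ ∈ L₀ | ℓ ⊆ π} : ℝ) ≤ x ^ 2 * y :=
      (Nat.cast_le.2 (card_le_card (filter_subset_filter _ hL₀))).trans (hplane π hπ)
    rw [totalDegree_mul_of_isDomain hi.ne_zero hg]
    refine HasSurfaceBound.add hL ?_ (ih hg (fun p hp => ?_)
      (fun ℓ hℓ => hL ℓ (mem_filter.1 hℓ).1) (fun ℓ hℓ => ?_) (hrestrict (filter_subset _ L)))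
    · exact hasSurfaceBound_of_irreducible hi _ (fun ℓ hℓ => hL ℓ (mem_filter.1 hℓ).1)
        (fun ℓ hℓ => (mem_filter.1 hℓ).2) hx hy (hrestrict (filter_subset _ L))
    · obtain ⟨hpP, hpi⟩ := mem_filter.1 hp
      have hmul := hPf p hpP
      rw [zeroSet, Set.mem_ofPred_eq, map_mul] at hmul
      exact (mul_eq_zero.1 hmul).resolve_left hpi
    · obtain ⟨hℓL, hℓi⟩ := mem_filter.1 hℓ
      exact ((hL ℓ hℓL).subset_zeroSet_mul_iff.1 (hLf ℓ hℓL)).resolve_left hℓi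

end SurfaceIncidences

section Recursion

open Finset MvPolynomial

variable {L : Finset (Set (Fin 3 → ℝ))} {x y : ℝ}

lemma exists_incidences_le_of_card_div_le (P : Finset (Fin 3 → ℝ)) (hL : ∀ ℓ ∈ L, IsLine ℓ)
    (hx : 0 ≤ x) (hy : 0 ≤ y)
    (hplane : ∀ π, IsPlane π → (#{ℓ ∈ L | ℓ ⊆ π} : ℝ) ≤ x ^ 2 * y) {k : ℕ} {X Y : ℝ}
    (hX : 0 ≤ X) (hY : 0 < Y) (hXY : (#P : ℝ) / 8 ^ k ≤ X * Y ^ 2) :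
    ∃ D : ℕ, (D : ℝ) ≤ 289440 * 2 ^ k ∧ ∃ P' ⊆ P, ∃ L' ⊆ L, #L' ≤ D ^ 2 ∧
      (Incidences P L : ℝ) ≤ 385920 * ((X + x + 1) * #(P \ P') +
        ((Y + 3) * (D + 1) + y) * #L) + Incidences P' L' := by
  obtain ⟨gs, hgs, hdeg, hcell⟩ := exists_polynomial_partition three_pos P k
  set f := gs.prod
  set D := f.totalDegree
  set PZ := {p ∈ P | p ∈ zeroSet f} with hPZ
  set LZ := {ℓ ∈ L | ℓ ⊆ zeroSet f} with hLZ
  have hPZP : PZ ⊆ P := filter_subset _ _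
  have hLZL : LZ ⊆ L := filter_subset _ _
  obtain ⟨P', hP', L', hL', hcard, hsurface⟩ : HasSurfaceBound x y D PZ LZ :=
    hasSurfaceBound_of_subset_zeroSet hgs (fun p hp => (mem_filter.1 hp).2)
      (fun ℓ hℓ => hL ℓ (hLZL hℓ)) (fun ℓ hℓ => (mem_filter.1 hℓ).2) hx hy fun π hπ =>
        (Nat.cast_le.2 (card_le_card (filter_subset_filter _ hLZL))).trans (hplane π hπ)
  have hcells : (Incidences (P \ PZ) L : ℝ) ≤ 385920 * (X + 1) * #(P \ PZ) +
      385920 * (Y + 1) * (#L * (D + 1)) := by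
    rw [hPZ, ← filter_not]
    refine incidences_notMem_zeroSet_le hL (by positivity) fun C hC => ?_
    obtain ⟨p, -, -, rfl⟩ := mem_cells_iff.1 hC
    have hXY' : (#(cellOf P gs p) : ℝ) ≤ X * Y ^ 2 :=
      (hcell p).trans (le_of_eq_of_le (by norm_num) hXY)
    exact (incidences_le_of_card_points_le (by norm_num) (fun ℓ hℓ => hL ℓ (mem_filter.1 hℓ).1)
      hY hXY').trans_eq (by ring)
  have hsplit : (Incidences P L : ℝ) ≤ Incidences (P \ PZ) L + #L * D + Incidences PZ LZ := by
    rw [hPZ, ← filter_not]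
    exact mod_cast incidences_le_add_incidences_zeroSet P hL f
  have hPcard : (#(P \ P') : ℝ) = #(P \ PZ) + #(PZ \ P') := by
    rw [← sdiff_union_sdiff_cancel hPZP hP', card_union_of_disjoint
      (disjoint_sdiff_self_left.mono_right sdiff_subset), Nat.cast_add]
  have hLcard : (y + D) * #LZ ≤ (y + D) * #L := by gcongr
  have hpoints : 0 ≤ x * #(P \ PZ) + X * #(PZ \ P') := by positivity
  refine ⟨D, hdeg.trans_eq (by norm_num), P', hP'.trans hPZP, L', hL'.trans hLZL, hcard, ?_⟩
  rw [hPcard]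
  linarith [(#L).cast_nonneg (α := ℝ), mul_nonneg (#L).cast_nonneg (D.cast_nonneg (α := ℝ))]

/-- With `μ = m^{1/2}` and `ν = n^{1/4}`, the scale `2 ^ k` is comparable to the smaller of `ν²` and
`μ / ν`. -/
lemma exists_two_pow_scale {K μ ν : ℝ} (hK : 0 < K) (hν : 0 < ν) (hKν : K ≤ ν ^ 2)
    (hKμ : K * ν ≤ μ) :
    ∃ k : ℕ, K * 2 ^ k ≤ ν ^ 2 ∧ K * 2 ^ k * ν ≤ μ ∧
      ν ^ 2 ≤ 2 * K * 2 ^ k * (1 + ν ^ 3 / μ) := by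
  have hμ : 0 < μ := (mul_pos hK hν).trans_le hKμ
  obtain ⟨k, hk, hk'⟩ := exists_nat_pow_near (x := min (ν ^ 2) (μ / ν) / K) (y := 2)
    ((one_le_div hK).2 (le_min hKν ((le_div_iff₀ hν).2 hKμ))) one_lt_two
  rw [le_div_iff₀' hK, le_min_iff, le_div_iff₀ hν] at hk
  rw [div_lt_iff₀' hK, pow_succ 2 k, min_lt_iff, div_lt_iff₀ hν] at hk'
  refine ⟨k, hk.1, hk.2, ?_⟩
  rcases hk' with h | h
  · have : 0 ≤ 2 * K * 2 ^ k * (ν ^ 3 / μ) := by positivity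
    linarith
  · calc ν ^ 2 = ν ^ 2 / μ * μ := by field_simp
      _ ≤ ν ^ 2 / μ * (K * (2 ^ k * 2) * ν) := by gcongr
      _ = 2 * K * 2 ^ k * (ν ^ 3 / μ) := by ring
      _ ≤ _ := by gcongr; linarith

lemma sq_div_pow_three_le {K μ ν t : ℝ} (hK : 1 ≤ K) (hμ : 0 < μ) (hν : 0 < ν) (ht : 0 < t)
    (h : ν ^ 2 ≤ 2 * K * t * (1 + ν ^ 3 / μ)) :
    μ ^ 2 / t ^ 3 ≤ (1 + ν ^ 3 / μ) * (2 * K * μ / (ν * t)) ^ 2 := by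
  have hKK : 2 * K * t * (1 + ν ^ 3 / μ) ≤ 4 * K ^ 2 * t * (1 + ν ^ 3 / μ) := by
    gcongr ?_ * _ * _
    nlinarith
  calc μ ^ 2 / t ^ 3 = μ ^ 2 / (ν ^ 2 * t ^ 3) * ν ^ 2 := by field_simp
    _ ≤ μ ^ 2 / (ν ^ 2 * t ^ 3) * (4 * K ^ 2 * t * (1 + ν ^ 3 / μ)) := by
      gcongr
      exact h.trans hKK
    _ = _ := by
      field_simp
      norm_num

/-- As `1157760 = 4 * 289440`, the partitioning polynomial has degree at most `ν ^ 2 / 4`, so that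
at most a sixteenth of the lines is left. -/
lemma exists_card_le_div_and_incidences_le {P : Finset (Fin 3 → ℝ)} (hL : ∀ ℓ ∈ L, IsLine ℓ)
    (hx : 0 ≤ x) (hy : 0 ≤ y)
    (hplane : ∀ π, IsPlane π → (#{ℓ ∈ L | ℓ ⊆ π} : ℝ) ≤ x ^ 2 * y) {μ ν : ℝ} (hν : 0 < ν)
    (hμP : μ ^ 2 = #P) (hνL : ν ^ 4 = #L) (hKν : 1157760 ≤ ν ^ 2) (hKμ : 1157760 * ν ≤ μ) :
    ∃ P' ⊆ P, ∃ L' ⊆ L, (#L' : ℝ) ≤ #L / 16 ∧ (Incidences P L : ℝ) ≤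
      385920 * ((x + 2) * #(P \ P') + 2 * 1157760 ^ 2 * (μ * ν ^ 3) + y * #L) +
        Incidences P' L' := by
  set K : ℝ := 1157760 with hK
  have hμ : 0 < μ := (mul_pos (by norm_num) hν).trans_le hKμ
  obtain ⟨k, hkν, hkμ, hk⟩ := exists_two_pow_scale (by norm_num) hν hKν hKμ
  set t : ℝ := 2 ^ k with ht
  have ht1 : 1 ≤ t := one_le_pow₀ one_le_two
  have hXY : (#P : ℝ) / 8 ^ k ≤ (1 + ν ^ 3 / μ) * (2 * K * μ / (ν * t)) ^ 2 := by
    rw [← hμP, show (8 : ℝ) ^ k = t ^ 3 by rw [ht, ← pow_mul, mul_comm, pow_mul]; norm_num]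
    exact sq_div_pow_three_le (by norm_num) hμ hν (by positivity) hk
  obtain ⟨D, hD, P', hP', L', hL', hcard, hI⟩ := exists_incidences_le_of_card_div_le P hL hx hy
    hplane (by positivity) (by positivity) hXY
  refine ⟨P', hP', L', hL', ?_, hI.trans ?_⟩
  · calc (#L' : ℝ) ≤ D ^ 2 := mod_cast hcard
      _ ≤ (ν ^ 2 / 4) ^ 2 := by gcongr; linarith
      _ = #L / 16 := by rw [← hνL]; ring
  have hpoints : ν ^ 3 / μ * #(P \ P') ≤ μ * ν ^ 3 := by
    calc ν ^ 3 / μ * #(P \ P') ≤ ν ^ 3 / μ * #P := by gcongr; exact sdiff_subset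
      _ = μ * ν ^ 3 := by rw [← hμP]; field_simp
  have hlines : (2 * K * μ / (ν * t) + 3) * (D + 1) * #L ≤ (K ^ 2 + 2) * (μ * ν ^ 3) := by
    calc (2 * K * μ / (ν * t) + 3) * (D + 1) * #L
        ≤ (2 * K * μ / (ν * t) + 3) * (K * t / 2) * ν ^ 4 := by
          rw [hνL]; gcongr; linarith
      _ = K ^ 2 * (μ * ν ^ 3) + 3 / 2 * (K * t * ν) * ν ^ 3 := by field_simp
      _ ≤ K ^ 2 * (μ * ν ^ 3) + 3 / 2 * μ * ν ^ 3 := by gcongr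
      _ ≤ _ := by nlinarith [mul_pos hμ (pow_pos hν 3)]
  have hμν := mul_pos hμ (pow_pos hν 3)
  rw [hK] at hlines
  linarith

lemma sqrt_sqrt_pow_four {a : ℝ} (ha : 0 ≤ a) : √(√a) ^ 4 = a := by
  rw [show 4 = 2 * 2 from rfl, pow_mul, Real.sq_sqrt (Real.sqrt_nonneg _), Real.sq_sqrt ha]

lemma sqrt_sqrt_pow_three {a : ℝ} (ha : 0 ≤ a) : √(√a) ^ 3 = a ^ (3 / 4 : ℝ) := by
  rw [Real.sqrt_eq_rpow, Real.sqrt_eq_rpow, ← Real.rpow_mul ha, ← Real.rpow_mul_natCast ha]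
  norm_num

lemma sqrt_mul_sqrt_sqrt_pow_three_le {a a' b b' : ℝ} (ha : a' ≤ a) (hb' : 0 ≤ b')
    (hb : b' ≤ b / 16) : √a' * √(√b') ^ 3 ≤ √a * √(√b) ^ 3 / 8 := by
  have hsqrt : √(√b') ≤ √(√b) / 2 := by
    rw [← pow_le_pow_iff_left₀ (Real.sqrt_nonneg _) (by positivity) four_ne_zero, div_pow,
      sqrt_sqrt_pow_four hb', sqrt_sqrt_pow_four (by linarith)]
    linarith
  calc √a' * √(√b') ^ 3 ≤ √a * (√(√b) / 2) ^ 3 := by gcongr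
    _ = _ := by ring

lemma div_sq_mul_div_eq_of_rpow_third {m n q : ℝ} (hm : 0 < m) (hn : 0 < n) (hq : 0 ≤ q) {R : ℝ}
    (hR : R = m ^ (2 / 3 : ℝ) * n ^ (1 / 3 : ℝ) * q ^ (1 / 3 : ℝ)) :
    (R / m) ^ 2 * (R / n) = q := by
  have hR3 : R ^ 3 = m ^ 2 * n * q := by
    rw [hR, mul_pow, mul_pow, ← Real.rpow_mul_natCast hm.le, ← Real.rpow_mul_natCast hn.le,
      ← Real.rpow_mul_natCast hq]
    norm_num
  rw [div_pow, div_mul_div_comm, ← pow_succ, hR3]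
  field_simp

lemma incidences_le_of_sqrt_sqrt_small (P : Finset (Fin 3 → ℝ)) (hL : ∀ ℓ ∈ L, IsLine ℓ) {K : ℝ}
    (hK : 1 ≤ K) (h : √(√(#L)) ^ 2 < K ∨ √(#P) < K * √(√(#L))) :
    (Incidences P L : ℝ) ≤ #P + K ^ 3 * (√(#P) * √(√(#L)) ^ 3 + #L) := by
  rcases h with hν | hμ
  · have hI : (Incidences P L : ℝ) ≤ #P + #L ^ 2 :=
      mod_cast incidences_le_card_points_add_sq P hL
    have hLK : (#L : ℝ) ≤ K ^ 3 := by
      calc (#L : ℝ) = (√(√(#L)) ^ 2) ^ 2 := by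
            rw [← pow_mul, sqrt_sqrt_pow_four (#L).cast_nonneg]
        _ ≤ K ^ 2 := by gcongr
        _ ≤ K ^ 3 := pow_le_pow_right₀ hK (by norm_num)
    calc (Incidences P L : ℝ) ≤ #P + #L * #L := by rwa [← sq]
      _ ≤ #P + K ^ 3 * #L := by gcongr
      _ ≤ _ := by gcongr; simp only [le_add_iff_nonneg_left]; positivity
  · have hI : (Incidences P L : ℝ) ≤ #L + #P ^ 2 :=
      mod_cast incidences_le_card_lines_add_sq P hL
    have hP : (#P : ℝ) ^ 2 ≤ K ^ 3 * (√(#P) * √(√(#L)) ^ 3) := by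
      calc (#P : ℝ) ^ 2 = √(#P) * √(#P) ^ 3 := by
            nth_rw 1 [← Real.sq_sqrt (#P).cast_nonneg]; ring
        _ ≤ √(#P) * (K * √(√(#L))) ^ 3 := by gcongr
        _ = _ := by ring
    have hK3 : (#L : ℝ) ≤ K ^ 3 * #L := le_mul_of_one_le_left (#L).cast_nonneg (one_le_pow₀ hK)
    linarith [(#P).cast_nonneg (α := ℝ)]

theorem incidences_le_of_card_subset_plane_le (P : Finset (Fin 3 → ℝ)) (hL : ∀ ℓ ∈ L, IsLine ℓ)
    (hx : 0 ≤ x) (hy : 0 ≤ y)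
    (hplane : ∀ π, IsPlane π → (#{ℓ ∈ L | ℓ ⊆ π} : ℝ) ≤ x ^ 2 * y) :
    (Incidences P L : ℝ) ≤ 385920 * ((x + 2) * #P +
      2 * 1157760 ^ 3 * (√(#P) * √(√(#L)) ^ 3 + (y + 1) * #L)) := by
  induction L using Finset.strongInduction generalizing P with | H L ih
  have hL0 := (#L).cast_nonneg (α := ℝ)
  have hM : 0 ≤ √(#P) * √(√(#L)) ^ 3 := by positivity
  by_cases hsmall : √(√(#L)) ^ 2 < 1157760 ∨ √(#P) < 1157760 * √(√(#L))
  · refine (incidences_le_of_sqrt_sqrt_small P hL (by norm_num) hsmall).trans ?_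
    have hxP : 0 ≤ x * #P := by positivity
    have hyL : 0 ≤ y * #L := by positivity
    linarith [(#P).cast_nonneg (α := ℝ)]
  push Not at hsmall
  obtain ⟨hKν, hKμ⟩ := hsmall
  have hν : 0 < √(√(#L)) := (sq_pos_iff.1 (by linarith)).lt_of_le' (Real.sqrt_nonneg _)
  have hνL : √(√(#L)) ^ 4 = #L := sqrt_sqrt_pow_four hL0
  obtain ⟨P', hP', L', hL', hcard, hI⟩ := exists_card_le_div_and_incidences_le hL hx hy hplane hν
    (Real.sq_sqrt (#P).cast_nonneg) hνL hKν hKμ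
  have hLpos : (0 : ℝ) < #L := hνL ▸ pow_pos hν 4
  have hlt : #L' < #L := by
    rw [← Nat.cast_lt (α := ℝ)]
    linarith
  have hI' := ih L' (hL'.ssubset_of_ne (by rintro rfl; exact hlt.false)) P'
    (fun ℓ hℓ => hL ℓ (hL' hℓ)) fun π hπ =>
      (Nat.cast_le.2 (card_le_card (filter_subset_filter _ hL'))).trans (hplane π hπ)
  have hM' := sqrt_mul_sqrt_sqrt_pow_three_le (Nat.cast_le (α := ℝ).2 (card_le_card hP'))
    (#L').cast_nonneg hcard
  have hyL' : (y + 1) * #L' ≤ (y + 1) * (#L / 16) := by gcongr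
  have hPcard : (x + 2) * #(P \ P') + (x + 2) * #P' = (x + 2) * #P := by
    rw [← mul_add, ← card_sdiff_add_card_eq_card hP', Nat.cast_add]
  have hyL : 0 ≤ y * #L := by positivity
  linarith

end Recursion

/-- **Guth–Katz point–line incidence theorem in `ℝ³`.** There is an absolute
constant `c` such that for every set `P` of `m` distinct points and set `L` of `n`
distinct lines in `ℝ³`, if no plane contains more than `q₂ ≤ n` lines of `L`, then
`I(P,L) ≤ c (m^{1/2} n^{3/4} + m^{2/3} n^{1/3} q₂^{1/3} + m + n)`. -/
theorem guth_katz_incidences :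
    ∃ c : ℝ, 0 < c ∧
      ∀ (P : Finset (Fin 3 → ℝ)) (L : Finset (Set (Fin 3 → ℝ))) (q₂ : ℕ),
        (∀ ℓ ∈ L, IsLine ℓ) →
        q₂ ≤ L.card →
        (∀ π : Set (Fin 3 → ℝ), IsPlane π → (L.filter fun ℓ => ℓ ⊆ π).card ≤ q₂) →
        (Incidences P L : ℝ) ≤
          c * ((P.card : ℝ) ^ ((1 : ℝ) / 2) * (L.card : ℝ) ^ ((3 : ℝ) / 4)
                + (P.card : ℝ) ^ ((2 : ℝ) / 3) * (L.card : ℝ) ^ ((1 : ℝ) / 3)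
                    * (q₂ : ℝ) ^ ((1 : ℝ) / 3)
                + (P.card : ℝ) + (L.card : ℝ)) := by
  refine ⟨385920 * (2 * 1157760 ^ 3 + 1), by norm_num, fun P L q hL _ hplane => ?_⟩
  rcases P.eq_empty_or_nonempty with rfl | hP
  · simp only [Incidences, Finset.empty_product, Finset.filter_empty, Finset.card_empty,
      Nat.cast_zero]
    positivity
  rcases L.eq_empty_or_nonempty with rfl | hLne
  · simp only [Incidences, Finset.product_empty, Finset.filter_empty, Finset.card_empty,
      Nat.cast_zero]
    positivity
  have hm : (0 : ℝ) < P.card := mod_cast hP.card_pos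
  have hn : (0 : ℝ) < L.card := mod_cast hLne.card_pos
  obtain ⟨R, hR⟩ : ∃ R : ℝ, R = P.card ^ (2 / 3 : ℝ) * L.card ^ (1 / 3 : ℝ) * q ^ (1 / 3 : ℝ) :=
    ⟨_, rfl⟩
  have hR0 : 0 ≤ R := hR ▸ by positivity
  have hI := incidences_le_of_card_subset_plane_le P hL (x := R / P.card) (y := R / L.card)
    (by positivity) (by positivity) fun π hπ => (Nat.cast_le.2 (hplane π hπ)).trans_eq
      (div_sq_mul_div_eq_of_rpow_third hm hn q.cast_nonneg hR).symm
  rw [add_mul (R / _), add_mul (R / _), div_mul_cancel₀ _ hm.ne', div_mul_cancel₀ _ hn.ne',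
    sqrt_sqrt_pow_three hn.le, Real.sqrt_eq_rpow] at hI
  rw [← hR]
  have hM : (0 : ℝ) ≤ P.card ^ (1 / 2 : ℝ) * L.card ^ (3 / 4 : ℝ) := by positivity
  linarith
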